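/- arXiv:2501.11303 — 2 statements merged into one kernel-verified Lean document; each statement's English description precedes it below -/
import Mathlib

section
/- Let k=(k_1,…,k_r) be a composition, let m∈ℕ_0, and set n=|k|+1−dep(k). Then ξ(m+1;k) = Σ_{|j|=m, dep(j)=n} B((←k^∨)_+; j)·ζ((←k^∨)_+ + j), where the sum is over j∈ℕ_0^n with j_1+⋯+j_n=m. -/
open scoped BigOperators
open MeasureTheory

/-- Multiple polylogarithm `Li_k(z) = Σ_{n₁>⋯>n_r>0} z^{n₁}/(n₁^{k₁}⋯n_r^{k_r})`. -/
noncomputable def MPL (k : List ℕ) (z : ℝ) : ℝ :=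
  if h : 0 < k.length then
    ∑' n : {n : Fin k.length → ℕ // StrictAnti n ∧ ∀ i, 0 < n i},
      z ^ (n.1 ⟨0, h⟩) / ∏ i, (n.1 i : ℝ) ^ k.get i
  else 1

/-- Level-two multiple polylogarithm
`A(k;x) = 2^r Σ_{n₁>⋯>n_r>0, n_j ≡ r+1-j (mod 2)} x^{n₁}/(n₁^{k₁}⋯n_r^{k_r})`. -/
noncomputable def AFn (k : List ℕ) (x : ℝ) : ℝ :=
  if h : 0 < k.length then
    2 ^ k.length *
      ∑' n : {n : Fin k.length → ℕ //
          StrictAnti n ∧ (∀ i, 0 < n i) ∧ ∀ i, n i % 2 = (k.length - i.val) % 2},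
        x ^ (n.1 ⟨0, h⟩) / ∏ i, (n.1 i : ℝ) ^ k.get i
  else 1

/-- Multiple zeta value `ζ(k) = Σ_{n₁>⋯>n_r>0} ∏ 1/n_i^{k_i}`. -/
noncomputable def MZV (k : List ℕ) : ℝ :=
  ∑' n : {n : Fin k.length → ℕ // StrictAnti n ∧ ∀ i, 0 < n i},
    ∏ i, 1 / (n.1 i : ℝ) ^ k.get i

/-- Multiple zeta star value `ζ⋆(k) = Σ_{n₁≥⋯≥n_r>0} ∏ 1/n_i^{k_i}`. -/
noncomputable def MZSV (k : List ℕ) : ℝ :=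
  ∑' n : {n : Fin k.length → ℕ // Antitone n ∧ ∀ i, 0 < n i},
    ∏ i, 1 / (n.1 i : ℝ) ^ k.get i

/-- Multiple T-value `T(k) = 2^r Σ_{n₁>⋯>n_r>0, n_j ≡ r+1-j (mod 2)} ∏ 1/n_i^{k_i}`. -/
noncomputable def MTV (k : List ℕ) : ℝ :=
  2 ^ k.length *
    ∑' n : {n : Fin k.length → ℕ //
        StrictAnti n ∧ (∀ i, 0 < n i) ∧ ∀ i, n i % 2 = (k.length - i.val) % 2},
      ∏ i, 1 / (n.1 i : ℝ) ^ k.get i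

/-- Hurwitz-type multiple zeta value `ζ(k;α) = Σ_{n₁>⋯>n_r>0} ∏ (n_i+α-1)^{-k_i}`. -/
noncomputable def HMZV (k : List ℕ) (α : ℂ) : ℂ :=
  ∑' n : {n : Fin k.length → ℕ // StrictAnti n ∧ ∀ i, 0 < n i},
    ∏ i, ((n.1 i : ℂ) + α - 1) ^ (-(k.get i : ℤ))

/-- Hurwitz-type multiple zeta star value `ζ⋆(k;α) = Σ_{n₁≥⋯≥n_r>0} ∏ (n_i+α-1)^{-k_i}`. -/
noncomputable def HMZSV (k : List ℕ) (α : ℂ) : ℂ :=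
  ∑' n : {n : Fin k.length → ℕ // Antitone n ∧ ∀ i, 0 < n i},
    ∏ i, ((n.1 i : ℂ) + α - 1) ^ (-(k.get i : ℤ))

/-- Hurwitz-type multiple T-value
`T(k;α) = Σ_{m₁>⋯>m_r>0} 2^r ∏_i (2m_i - r - 2 + i + α)^{-k_i}` (1-indexed `i`). -/
noncomputable def HMTV (k : List ℕ) (α : ℂ) : ℂ :=
  ∑' n : {n : Fin k.length → ℕ // StrictAnti n ∧ ∀ i, 0 < n i},
    2 ^ k.length *
      ∏ i, (2 * (n.1 i : ℂ) - (k.length : ℂ) - 1 + (i.val : ℂ) + α) ^ (-(k.get i : ℤ))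

/-- The boolean word (sequence of bits between consecutive units) of a composition. -/
def toWord : List ℕ → List Bool
  | [] => []
  | [a] => List.replicate (a - 1) false
  | a :: b :: rest => List.replicate (a - 1) false ++ true :: toWord (b :: rest)

/-- The composition corresponding to a boolean word. -/
def fromWord : List Bool → List ℕ
  | [] => [1]
  | false :: w =>
    match fromWord w with
    | [] => [1]
    | a :: t => (a + 1) :: t
  | true :: w => 1 :: fromWord w

/-- Hoffman dual of a composition: swap commas and plus signs in
`k = (1+⋯+1, …, 1+⋯+1)`. -/
def HDual (k : List ℕ) : List ℕ := fromWord ((toWord k).map fun b => !b)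

/-- `k₊ = (k₁+1, k₂, …, k_r)`. -/
def plusOne : List ℕ → List ℕ
  | [] => []
  | a :: t => (a + 1) :: t

/-- `Refines l k` means the composition `k` can be obtained from `l`
by combining some consecutive parts of `l`, i.e. `l ⪰ k`. -/
inductive Refines : List ℕ → List ℕ → Prop
  | nil : Refines [] []
  | cons (b l k : List ℕ) : b ≠ [] → Refines l k → Refines (b ++ l) (b.sum :: k)

/-- Arakawa–Kaneko zeta function `ξ(s;k) = (1/Γ(s)) ∫_0^∞ t^{s-1}/(e^t-1) Li_k(1-e^{-t}) dt`. -/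
noncomputable def xiAK (s : ℂ) (k : List ℕ) : ℂ :=
  (1 / Complex.Gamma s) *
    ∫ t in Set.Ioi (0 : ℝ),
      (t : ℂ) ^ (s - 1) / ((Real.exp t : ℂ) - 1) * (MPL k (1 - Real.exp (-t)) : ℂ)

/-- Kaneko–Tsumura η-function `η(s;k) = (1/Γ(s)) ∫_0^∞ t^{s-1}/(1-e^t) Li_k(1-e^{t}) dt`. -/
noncomputable def etaKT (s : ℂ) (k : List ℕ) : ℂ :=
  (1 / Complex.Gamma s) *
    ∫ t in Set.Ioi (0 : ℝ),
      (t : ℂ) ^ (s - 1) / (1 - (Real.exp t : ℂ)) * (MPL k (1 - Real.exp t) : ℂ)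

/-- Kaneko–Tsumura ψ-function `ψ(s;k) = (1/Γ(s)) ∫_0^∞ t^{s-1} A(k; tanh(t/2))/sinh(t) dt`. -/
noncomputable def psiKT (s : ℂ) (k : List ℕ) : ℂ :=
  (1 / Complex.Gamma s) *
    ∫ t in Set.Ioi (0 : ℝ),
      (t : ℂ) ^ (s - 1) * ((AFn k (Real.tanh (t / 2)) / Real.sinh t : ℝ) : ℂ)

/-- Riemann zeta value `ζ(a) = Σ_{n>0} 1/n^a`. -/
noncomputable def zeta1 (a : ℕ) : ℝ := ∑' n : {n : ℕ // 0 < n}, 1 / (n.1 : ℝ) ^ a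

/-- Double zeta value `ζ(a,b) = Σ_{n₁>n₂>0} 1/(n₁^a n₂^b)`. -/
noncomputable def zeta2 (a b : ℕ) : ℝ :=
  ∑' p : {p : ℕ × ℕ // p.2 < p.1 ∧ 0 < p.2}, 1 / ((p.1.1 : ℝ) ^ a * (p.1.2 : ℝ) ^ b)

/-- Single T-value `T(a) = 2 Σ_{n>0 odd} 1/n^a`. -/
noncomputable def T1 (a : ℕ) : ℝ := 2 * ∑' n : {n : ℕ // 0 < n ∧ n % 2 = 1}, 1 / (n.1 : ℝ) ^ a

/-- Double T-value `T(a,b) = 4 Σ_{n₁>n₂>0, n₁ even, n₂ odd} 1/(n₁^a n₂^b)`. -/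
noncomputable def T2 (a b : ℕ) : ℝ :=
  4 * ∑' p : {p : ℕ × ℕ // p.2 < p.1 ∧ 0 < p.2 ∧ p.1 % 2 = 0 ∧ p.2 % 2 = 1},
    1 / ((p.1.1 : ℝ) ^ a * (p.1.2 : ℝ) ^ b)

/-!
The function `t^m / m! · e^{-nt}` is the coefficient of `X^m` in `e^{-(n - X)t}`, so
`ξ(m + 1; k)` is the coefficient of `X^m` in the Laplace transform, at `-X`, of
`Li_k(1 - e^{-t}) / (e^t - 1)`. Now `Li_k(1 - e^{-t})` is an iterated integral in the forms `du`
and `du / (e^u - 1)`, along a word read off from `k`. On Laplace transforms at `n - X`, taking the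
primitive vanishing at `0` multiplies by `1 / (n - X)`, while multiplying the function by
`1 / (e^u - 1) = ∑_{q ≥ 1} e^{-qu}` replaces the value at `n` by the sum of the values at all
`q > n`. Hence the transform is a series `∑_{0 < n_1 < ⋯ < n_d} ∏ (n_i - X)^{-c_i}`, whose
exponents count the integrations between consecutive factors `1 / (e^u - 1)`; read from the largest
variable down, they form `(←k^∨)_+`.
Expanding `(n - X)^{-c} = ∑_j C(c + j - 1, j) n^{-(c + j)} X^j` produces the binomial coefficients.

All series and integrals are taken in `ℝ≥0∞`, where every interchange is unconditional; finiteness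
matters only when returning to `ℂ`, and follows from the convergence of the multiple zeta values.
-/

namespace ArakawaKaneko

open Set PowerSeries
open scoped ENNReal

/-! ### Words and the Hoffman dual -/

theorem fromWord_true (w : List Bool) : fromWord (true :: w) = 1 :: fromWord w := rfl

theorem fromWord_ne_nil (w : List Bool) : fromWord w ≠ [] := by
  unfold fromWord
  split
  · simp
  · split <;> simp
  · simp

theorem fromWord_false (w : List Bool) : fromWord (false :: w) = plusOne (fromWord w) := by
  obtain ⟨a, t, h⟩ := List.exists_cons_of_ne_nil (fromWord_ne_nil w)
  simp only [fromWord, h, plusOne]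

theorem fromWord_pos (w : List Bool) : ∀ a ∈ fromWord w, 0 < a := by
  induction w with
  | nil => simp [fromWord]
  | cons b w ih =>
    cases b with
    | true => simpa [fromWord_true] using ih
    | false =>
      obtain ⟨a, t, h⟩ := List.exists_cons_of_ne_nil (fromWord_ne_nil w)
      simp_all [fromWord_false, plusOne]

theorem length_plusOne (k : List ℕ) : (plusOne k).length = k.length := by
  cases k <;> rfl

theorem length_fromWord (w : List Bool) : (fromWord w).length = w.count true + 1 := by
  induction w with
  | nil => rfl
  | cons b w ih =>
    cases b with
    | true => simp [fromWord_true, ih]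
    | false => simp [fromWord_false, length_plusOne, ih]

theorem toWord_one_cons {k : List ℕ} (hk : k ≠ []) : toWord (1 :: k) = true :: toWord k := by
  obtain ⟨a, t, rfl⟩ := List.exists_cons_of_ne_nil hk
  rfl

theorem toWord_succ_cons {a : ℕ} (ha : 0 < a) (k : List ℕ) :
    toWord ((a + 1) :: k) = false :: toWord (a :: k) := by
  obtain ⟨a, rfl⟩ := Nat.exists_eq_succ_of_ne_zero ha.ne'
  cases k <;> rfl

theorem toWord_fromWord (w : List Bool) : toWord (fromWord w) = w := by
  induction w with
  | nil => rfl
  | cons b w ih =>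
    cases b with
    | true => rw [fromWord_true, toWord_one_cons (fromWord_ne_nil w), ih]
    | false =>
      obtain ⟨a, t, h⟩ := List.exists_cons_of_ne_nil (fromWord_ne_nil w)
      have ha : 0 < a := fromWord_pos w a (by simp [h])
      rw [fromWord_false, h, plusOne, toWord_succ_cons ha, ← h, ih]

theorem fromWord_replicate_append (a : ℕ) (w : List Bool) :
    fromWord (List.replicate a false ++ true :: w) = (a + 1) :: fromWord w := by
  induction a with
  | zero => rfl
  | succ a ih => rw [List.replicate_succ, List.cons_append, fromWord_false, ih, plusOne]

theorem fromWord_replicate (a : ℕ) : fromWord (List.replicate a false) = [a + 1] := by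
  induction a with
  | zero => rfl
  | succ a ih => rw [List.replicate_succ, fromWord_false, ih, plusOne]

theorem fromWord_toWord {k : List ℕ} (hk : k ≠ []) (hpos : ∀ a ∈ k, 0 < a) :
    fromWord (toWord k) = k := by
  induction k with
  | nil => exact absurd rfl hk
  | cons a k ih =>
    have ha : a - 1 + 1 = a := Nat.sub_add_cancel (hpos a (by simp))
    cases k with
    | nil => rw [toWord, fromWord_replicate, ha]
    | cons b k =>
      rw [toWord, fromWord_replicate_append, ha,
        ih (List.cons_ne_nil b k) fun c hc => hpos c (List.mem_cons_of_mem a hc)]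

theorem toWord_append_singleton {k : List ℕ} (hk : k ≠ []) (a : ℕ) :
    toWord (k ++ [a]) = toWord k ++ true :: List.replicate (a - 1) false := by
  induction k with
  | nil => exact absurd rfl hk
  | cons b k ih =>
    cases k with
    | nil => simp [toWord]
    | cons c k => simpa [toWord] using ih (List.cons_ne_nil c k)

theorem toWord_reverse (k : List ℕ) : toWord k.reverse = (toWord k).reverse := by
  induction k with
  | nil => rfl
  | cons b k ih =>
    cases k with
    | nil => simp [toWord]
    | cons c k =>
      rw [List.reverse_cons, toWord_append_singleton (by simp), ih]
      simp [toWord]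

theorem fromWord_reverse (w : List Bool) : fromWord w.reverse = (fromWord w).reverse := by
  have hpos : ∀ a ∈ (fromWord w).reverse, 0 < a := by simpa using fromWord_pos w
  rw [← fromWord_toWord (List.reverse_ne_nil_iff.mpr (fromWord_ne_nil w)) hpos, toWord_reverse,
    toWord_fromWord]

/-- The word `1^{k₁-1} 0 1^{k₂-1} 0 ⋯ 1^{k_r-1} 0` of the iterated integral `Li_k(1 - e^{-t})`,
outermost form first; `true` stands for the form `du / (e^u - 1)` and `false` for `du`. -/
def polylogWord (k : List ℕ) : List Bool :=
  k.flatMap fun a => List.replicate (a - 1) true ++ [false]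

theorem polylogWord_eq_map_toWord {k : List ℕ} (hk : k ≠ []) :
    polylogWord k = ((toWord k).map fun b => !b) ++ [false] := by
  induction k with
  | nil => exact absurd rfl hk
  | cons a k ih =>
    cases k with
    | nil => simp [polylogWord, toWord]
    | cons b k =>
      rw [polylogWord, List.flatMap_cons, ← polylogWord, ih (List.cons_ne_nil b k)]
      simp [toWord]

theorem plusOne_HDual_reverse {k : List ℕ} (hk : k ≠ []) :
    plusOne (HDual k.reverse) = (fromWord (polylogWord k)).reverse := by
  rw [polylogWord_eq_map_toWord hk, ← fromWord_reverse, List.reverse_append,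
    List.reverse_singleton, List.singleton_append, fromWord_false, HDual, toWord_reverse,
    List.map_reverse]

theorem getD_plusOne_HDual_pos (k : List ℕ) {i : ℕ} (hi : i < (plusOne (HDual k)).length) :
    0 < (plusOne (HDual k)).getD i 0 := by
  rw [List.getD_eq_getElem _ _ hi]
  have hmem := List.getElem_mem hi
  simp only [HDual, ← fromWord_false] at hmem ⊢
  exact fromWord_pos _ _ hmem

theorem two_le_getD_plusOne_HDual_zero (k : List ℕ) : 2 ≤ (plusOne (HDual k)).getD 0 0 := by
  obtain ⟨a, t, h⟩ := List.exists_cons_of_ne_nil (fromWord_ne_nil ((toWord k).map fun b => !b))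
  have ha : 0 < a := fromWord_pos _ a (h ▸ List.mem_cons_self)
  simp only [HDual, h, plusOne, List.getD_cons_zero]
  omega

theorem count_true_polylogWord_add_length {k : List ℕ} (hpos : ∀ a ∈ k, 0 < a) :
    (polylogWord k).count true + k.length = k.sum := by
  induction k with
  | nil => rfl
  | cons a k ih =>
    have ha := hpos a (by simp)
    have hk := ih fun b hb => hpos b (List.mem_cons_of_mem a hb)
    simp only [polylogWord, List.flatMap_cons, List.append_assoc, List.count_append,
      List.count_replicate_self, List.length_cons, List.sum_cons] at hk ⊢
    simp only [List.count_singleton, beq_true, Bool.false_eq_true, if_false]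
    omega

theorem length_fromWord_polylogWord {k : List ℕ} (hpos : ∀ a ∈ k, 0 < a) :
    (fromWord (polylogWord k)).length = k.sum + 1 - k.length := by
  have := count_true_polylogWord_add_length hpos
  rw [length_fromWord]
  omega

/-! ### Power series -/

section PowerSeries

variable {R : Type*} [CommSemiring R]

/-- The power series of `1 / (x⁻¹ - X)`, written without subtraction so that it makes sense over
the semiring `ℝ≥0∞`. -/
def geomSeries (x : R) : R⟦X⟧ := PowerSeries.mk fun j => x ^ (j + 1)

theorem coeff_geomSeries_pow (x : R) (c j : ℕ) :
    coeff j (geomSeries x ^ c) = (c.multichoose j : R) * x ^ (c + j) := by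
  induction c generalizing j with
  | zero => cases j <;> simp [coeff_one]
  | succ c ih =>
    have hockey : ∑ i ∈ Finset.range (j + 1), c.multichoose i = (c + 1).multichoose j := by
      rw [Nat.sum_range_multichoose, Nat.multichoose_eq, Nat.add_right_comm, Nat.add_sub_cancel,
        Nat.add_comm, Nat.choose_symm_add]
    have hterm : ∀ i ∈ Finset.range (j + 1), coeff i (geomSeries x ^ c) *
        coeff (j - i) (geomSeries x) = (c.multichoose i : R) * x ^ (c + 1 + j) := by
      intro i hi
      have hexp : c + i + (j - i + 1) = c + 1 + j := by
        have := Finset.mem_range.mp hi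
        omega
      rw [ih, geomSeries, coeff_mk, mul_assoc, ← pow_add, hexp]
    rw [pow_succ, coeff_mul, Finset.Nat.sum_antidiagonal_eq_sum_range_succ_mk,
      Finset.sum_congr rfl hterm, ← Finset.sum_mul, ← Nat.cast_sum, hockey]

theorem coeff_prod_univ_fin {d : ℕ} (f : Fin d → R⟦X⟧) (m : ℕ) :
    coeff m (∏ i, f i) = ∑ j ∈ Finset.Nat.antidiagonalTuple d m, ∏ i, coeff (j i) (f i) := by
  rw [coeff_prod]
  refine Finset.sum_equiv Finsupp.equivFunOnFinite (fun l => ?_) fun l _ => rfl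
  simp [Finset.mem_finsuppAntidiag, Finset.Nat.mem_antidiagonalTuple]

end PowerSeries

/-! ### Sums over chains -/

section Chains

variable {α : Type*} (r : α → α → Prop)

/-- The `d`-tuples of elements of `s` whose entries are related by `r` in order of position: the
summation range of a multiple zeta series. -/
def chains (d : ℕ) (s : Set α) : Set (Fin d → α) :=
  {n | (∀ ⦃i j⦄, i < j → r (n i) (n j)) ∧ ∀ i, n i ∈ s}

theorem cons_mem_chains {d : ℕ} {s : Set α} {p : α} {n : Fin d → α} :
    (Fin.cons p n : Fin (d + 1) → α) ∈ chains r (d + 1) s ↔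
      p ∈ s ∧ n ∈ chains r d (s ∩ {x | r p x}) := by
  simp only [chains, mem_ofPred_eq, Fin.forall_fin_succ, Fin.cons_zero, Fin.cons_succ,
    mem_inter_iff, Fin.succ_lt_succ_iff, Fin.succ_pos, Fin.not_lt_zero, forall_true_left,
    false_imp_iff, true_and]
  grind

theorem tsum_chains_succ {d : ℕ} (s : Set α) (h : (Fin (d + 1) → α) → ℝ≥0∞) :
    ∑' n : chains r (d + 1) s, h n =
      ∑' p : s, ∑' n : chains r d (s ∩ {x | r p x}), h (Fin.cons p.1 n.1) := by
  rw [tsum_subtype, ← (Fin.consEquiv fun _ : Fin (d + 1) => α).tsum_eq, ENNReal.tsum_prod',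
    tsum_subtype s fun p => ∑' n : chains r d (s ∩ {x | r p x}), h (Fin.cons p n.1)]
  refine tsum_congr fun p => ?_
  by_cases hp : p ∈ s
  · rw [indicator_of_mem hp, tsum_subtype _ fun n : Fin d → α => h (Fin.cons p n)]
    exact tsum_congr fun n => indicator_eq_indicator
      ((cons_mem_chains r).trans (and_iff_right hp)) rfl
  · rw [indicator_of_notMem hp, ENNReal.tsum_eq_zero]
    exact fun n => indicator_of_notMem (fun hn => hp ((cons_mem_chains r).mp hn).1) _

theorem comp_rev_mem_chains {d : ℕ} {s : Set α} {n : Fin d → α} :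
    n ∘ Fin.rev ∈ chains r d s ↔ n ∈ chains (Function.swap r) d s := by
  constructor
  · rintro ⟨hr, hs⟩
    exact ⟨fun i j hij => by simpa using hr (Fin.rev_lt_rev.mpr hij),
      fun i => by simpa using hs i.rev⟩
  · rintro ⟨hr, hs⟩
    exact ⟨fun i j hij => hr (Fin.rev_lt_rev.mpr hij), fun i => hs i.rev⟩

theorem tsum_chains_rev {d : ℕ} (s : Set α) (h : (Fin d → α) → ℝ≥0∞) :
    ∑' n : chains r d s, h n = ∑' n : chains (Function.swap r) d s, h (n.1 ∘ Fin.rev) :=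
  (((Fin.revPerm.arrowCongr (Equiv.refl α)).subtypeEquiv
    fun _ => (comp_rev_mem_chains r).symm).tsum_eq fun n : chains r d s => h n).symm

end Chains

/-! ### Multiple zeta values and multiple polylogarithms as sums in `ℝ≥0∞` -/

section Harmonic

variable {d : ℕ}

/-- The multiple zeta series of exponent `k` with all summation variables restricted to `s`. -/
noncomputable def harmonicSum (k : Fin d → ℕ) (s : Set ℕ) : ℝ≥0∞ :=
  ∑' n : chains (· > ·) d s, ∏ i, (n.1 i : ℝ≥0∞)⁻¹ ^ k i

theorem harmonicSum_nil (k : Fin 0 → ℕ) (s : Set ℕ) : harmonicSum k s = 1 := by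
  rw [harmonicSum, tsum_subtype _ fun n : Fin 0 → ℕ => ∏ i, (n i : ℝ≥0∞)⁻¹ ^ k i, tsum_fintype]
  simp [chains]

theorem harmonicSum_succ (k : Fin (d + 1) → ℕ) (s : Set ℕ) :
    harmonicSum k s =
      ∑' p : s, (p : ℝ≥0∞)⁻¹ ^ k 0 * harmonicSum (Fin.tail k) (s ∩ Iio p) := by
  rw [harmonicSum, tsum_chains_succ _ _ fun n : Fin (d + 1) → ℕ => ∏ i, (n i : ℝ≥0∞)⁻¹ ^ k i]
  simp only [Fin.prod_univ_succ, Fin.cons_zero, Fin.cons_succ, ENNReal.tsum_mul_left]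
  rfl

theorem inv_natCast_pow_ne_top {p : ℕ} (hp : 0 < p) (a : ℕ) : (p : ℝ≥0∞)⁻¹ ^ a ≠ ∞ :=
  ENNReal.pow_ne_top (ENNReal.inv_ne_top.mpr (by exact_mod_cast hp.ne'))

theorem MZV_eq_toReal_harmonicSum (k : List ℕ) : MZV k = (harmonicSum k.get (Ioi 0)).toReal := by
  rw [harmonicSum, ENNReal.tsum_toReal_eq]
  · simp only [MZV, ENNReal.toReal_prod, ENNReal.toReal_pow, ENNReal.toReal_inv,
      ENNReal.toReal_natCast, one_div, inv_pow]
    rfl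
  · exact fun n => ENNReal.prod_ne_top fun i _ => inv_natCast_pow_ne_top (n.2.2 i) _

theorem harmonicSum_get_ofFn (f : Fin d → ℕ) (s : Set ℕ) :
    harmonicSum (List.ofFn f).get s = harmonicSum f s := by
  have hcast : ∀ {e : ℕ} (h : e = d), harmonicSum (f ∘ Fin.cast h) s = harmonicSum f s := by
    rintro _ rfl
    rfl
  rw [← hcast List.length_ofFn]
  congr 1
  ext i
  simp [Fin.cast]

theorem MZV_ofFn (f : Fin d → ℕ) : MZV (List.ofFn f) = (harmonicSum f (Ioi 0)).toReal := by
  rw [MZV_eq_toReal_harmonicSum, harmonicSum_get_ofFn]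

theorem tsum_prod_fin_eq_pow {α : Type*} (g : α → ℝ≥0∞) (d : ℕ) :
    ∑' n : Fin d → α, ∏ i, g (n i) = (∑' a, g a) ^ d := by
  induction d with
  | zero => simp
  | succ d ih =>
    rw [← (Fin.consEquiv fun _ => α).tsum_eq, ENNReal.tsum_prod']
    simp [Fin.consEquiv, Fin.prod_univ_succ, ENNReal.tsum_mul_left, ENNReal.tsum_mul_right, ih,
      pow_succ']

theorem prod_inv_pow_le_prod_rpow {k : Fin (d + 1) → ℕ} (hk : ∀ i, 0 < k i) (hk0 : 2 ≤ k 0)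
    {x : Fin (d + 1) → ℝ} (hx : ∀ i, 1 ≤ x i) (hmax : ∀ i, x i ≤ x 0) :
    ∏ i, (x i)⁻¹ ^ k i ≤ ∏ i, x i ^ (-(1 + 1 / (d + 1) : ℝ)) := by
  have hpos : ∀ i, 0 < x i := fun i => one_pos.trans_le (hx i)
  have hinv : ∀ i, 0 ≤ (x i)⁻¹ := fun i => (inv_pos.mpr (hpos i)).le
  have hone : ∀ i, (x i)⁻¹ ≤ 1 := fun i => inv_le_one_of_one_le₀ (hx i)
  have hroot : (x 0)⁻¹ = ∏ _i : Fin (d + 1), x 0 ^ (-(1 / (d + 1) : ℝ)) := by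
    rw [Finset.prod_const, Finset.card_fin, ← Real.rpow_natCast, ← Real.rpow_mul (hpos 0).le,
      ← Real.rpow_neg_one]
    congr 1
    push_cast
    field_simp
  -- The second factor `(x 0)⁻¹`, available as `2 ≤ k 0`, is shared out equally among the variables.
  calc ∏ i, (x i)⁻¹ ^ k i
      ≤ (x 0)⁻¹ * ∏ i, (x i)⁻¹ := by
        rw [Fin.prod_univ_succ, Fin.prod_univ_succ, ← mul_assoc, ← sq]
        refine mul_le_mul (pow_le_pow_of_le_one (hinv 0) (hone 0) hk0)
          (Finset.prod_le_prod (fun i _ => pow_nonneg (hinv _) _) fun i _ => ?_)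
          (Finset.prod_nonneg fun i _ => pow_nonneg (hinv _) _) (sq_nonneg _)
        exact pow_le_of_le_one (hinv _) (hone _) (hk _).ne'
    _ ≤ (∏ i, x i ^ (-(1 / (d + 1) : ℝ))) * ∏ i, (x i)⁻¹ := by
        rw [hroot]
        refine mul_le_mul_of_nonneg_right (Finset.prod_le_prod
          (fun _ _ => Real.rpow_nonneg (hpos 0).le _) fun i _ => ?_)
          (Finset.prod_nonneg fun i _ => hinv i)
        exact Real.rpow_le_rpow_of_nonpos (hpos i) (hmax i) (neg_nonpos.mpr (by positivity))
    _ = ∏ i, x i ^ (-(1 + 1 / (d + 1) : ℝ)) := by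
        rw [← Finset.prod_mul_distrib]
        refine Finset.prod_congr rfl fun i _ => ?_
        rw [← Real.rpow_neg_one, ← Real.rpow_add (hpos i)]
        ring_nf

theorem harmonicSum_ne_top {k : Fin (d + 1) → ℕ} (hk : ∀ i, 0 < k i) (hk0 : 2 ≤ k 0) :
    harmonicSum k (Ioi 0) ≠ ∞ := by
  let g : ℕ → ℝ := fun p => (p : ℝ) ^ (-(1 + 1 / (d + 1) : ℝ))
  have hg : Summable g := Real.summable_nat_rpow.mpr
    (neg_lt_neg (lt_add_of_pos_right 1 (by positivity)))
  have hle : ∀ n : chains (· > ·) (d + 1) (Ioi (0 : ℕ)),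
      ∏ i, (n.1 i : ℝ≥0∞)⁻¹ ^ k i ≤ ∏ i, ENNReal.ofReal (g (n.1 i)) := by
    rintro ⟨n, hanti, hpos⟩
    have hmono : ∀ i, n i ≤ n 0 := fun i => (Fin.zero_le i).eq_or_lt.elim
      (fun h => (congrArg n h).ge) fun h => (hanti h).le
    have hcast : ∀ i, (n i : ℝ≥0∞)⁻¹ ^ k i = ENNReal.ofReal ((n i : ℝ)⁻¹ ^ k i) := fun i => by
      rw [ENNReal.ofReal_pow (by positivity), ENNReal.ofReal_inv_of_pos
        (Nat.cast_pos.mpr (hpos i)), ENNReal.ofReal_natCast]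
    simp only [hcast]
    rw [← ENNReal.ofReal_prod_of_nonneg fun i _ => by positivity,
      ← ENNReal.ofReal_prod_of_nonneg fun i _ => by positivity]
    exact ENNReal.ofReal_le_ofReal (prod_inv_pow_le_prod_rpow hk hk0
      (fun i => Nat.one_le_cast.mpr (hpos i)) fun i => Nat.cast_le.mpr (hmono i))
  refine ne_top_of_le_ne_top ?_ ((ENNReal.tsum_le_tsum hle).trans
    (ENNReal.tsum_comp_le_tsum_of_injective Subtype.val_injective
      fun n : Fin (d + 1) → ℕ => ∏ i, ENNReal.ofReal (g (n i))))
  rw [tsum_prod_fin_eq_pow fun p => ENNReal.ofReal (g p)]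
  exact ENNReal.pow_ne_top hg.tsum_ofReal_ne_top

end Harmonic

/-- The multiple polylogarithm `Li_k(z)` for `z : ℝ≥0∞`, with the outermost sum split off because
only its summation variable is the exponent of `z`. -/
noncomputable def polylog : List ℕ → ℝ≥0∞ → ℝ≥0∞
  | [], _ => 1
  | k :: ks, z => ∑' p : Ioi (0 : ℕ), z ^ p.1 * ((p : ℝ≥0∞)⁻¹ ^ k * harmonicSum ks.get (Ioo 0 p))

theorem MPL_eq_toReal_polylog (k : List ℕ) {z : ℝ} (hz : 0 ≤ z) :
    MPL k z = (polylog k (ENNReal.ofReal z)).toReal := by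
  cases k with
  | nil => simp [MPL, polylog]
  | cons k ks =>
    have hchains : polylog (k :: ks) (ENNReal.ofReal z) =
        ∑' n : chains (· > ·) (ks.length + 1) (Ioi (0 : ℕ)),
          ENNReal.ofReal z ^ n.1 0 * ∏ i, (n.1 i : ℝ≥0∞)⁻¹ ^ (k :: ks).get i := by
      rw [tsum_chains_succ _ _ fun n : Fin (ks.length + 1) → ℕ =>
        ENNReal.ofReal z ^ n 0 * ∏ i, (n i : ℝ≥0∞)⁻¹ ^ (k :: ks).get i]
      simp only [Fin.prod_univ_succ, Fin.cons_zero, Fin.cons_succ, ENNReal.tsum_mul_left]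
      rfl
    rw [hchains, ENNReal.tsum_toReal_eq]
    · simp only [MPL, List.length_cons, Nat.succ_pos, dif_pos, ENNReal.toReal_mul,
        ENNReal.toReal_prod, ENNReal.toReal_pow, ENNReal.toReal_inv, ENNReal.toReal_natCast,
        ENNReal.toReal_ofReal hz, inv_pow, Finset.prod_inv_distrib, div_eq_mul_inv]
      rfl
    · exact fun n => ENNReal.mul_ne_top (ENNReal.pow_ne_top ENNReal.ofReal_ne_top)
        (ENNReal.prod_ne_top fun i _ => inv_natCast_pow_ne_top (n.2.2 i) _)

theorem tsum_Ioi_tsum_Ioo_comm (f : ℕ → ℕ → ℝ≥0∞) :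
    ∑' p : Ioi (0 : ℕ), ∑' q : Ioo 0 p.1, f p q = ∑' q : Ioi (0 : ℕ), ∑' p : Ioi q.1, f p q := by
  let e : (Σ p : Ioi (0 : ℕ), Ioo 0 p.1) ≃ Σ q : Ioi (0 : ℕ), Ioi q.1 :=
    { toFun := fun x => ⟨⟨x.2, x.2.2.1⟩, ⟨x.1, x.2.2.2⟩⟩
      invFun := fun y => ⟨⟨y.2, (mem_Ioi.mp y.1.2).trans y.2.2⟩, ⟨y.1, y.1.2, y.2.2⟩⟩
      left_inv := fun _ => rfl
      right_inv := fun _ => rfl }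
  rw [← ENNReal.tsum_sigma fun (p : Ioi (0 : ℕ)) (q : Ioo 0 p.1) => f p q,
    ← ENNReal.tsum_sigma fun (q : Ioi (0 : ℕ)) (p : Ioi q.1) => f p q]
  exact e.tsum_eq fun y => f y.2 y.1

theorem tsum_Ioi_pow (z : ℝ≥0∞) (n : ℕ) : ∑' p : Ioi n, z ^ p.1 = z * (1 - z)⁻¹ * z ^ n := by
  have hrange : Ioi n = range fun j => n + (j + 1) := by
    ext p
    simp only [mem_Ioi, mem_range]
    exact ⟨fun h => ⟨p - n - 1, by omega⟩, by omega⟩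
  rw [hrange, tsum_range (fun p => z ^ p) fun i j h => by omega]
  simp only [pow_add z n, ENNReal.tsum_mul_left, ENNReal.tsum_geometric_add_one, mul_comm]

theorem polylog_zero_cons (ks : List ℕ) (z : ℝ≥0∞) :
    polylog (0 :: ks) z = z * (1 - z)⁻¹ * polylog ks z := by
  cases ks with
  | nil => simp [polylog, harmonicSum_nil, tsum_Ioi_pow]
  | cons k ks =>
    have hinner : ∀ p : Ioi (0 : ℕ), z ^ p.1 * ((p : ℝ≥0∞)⁻¹ ^ 0 *
        harmonicSum (k :: ks).get (Ioo 0 p)) =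
          ∑' q : Ioo 0 p.1, z ^ p.1 * ((q : ℝ≥0∞)⁻¹ ^ k * harmonicSum ks.get (Ioo 0 q)) := by
      intro p
      rw [pow_zero, one_mul, harmonicSum_succ, ← ENNReal.tsum_mul_left]
      refine tsum_congr fun q => ?_
      rw [Ioo_inter_Iio, min_eq_right q.2.2.le]
      rfl
    rw [polylog, tsum_congr hinner, tsum_Ioi_tsum_Ioo_comm fun p q =>
      z ^ p * ((q : ℝ≥0∞)⁻¹ ^ k * harmonicSum ks.get (Ioo 0 q)), polylog, ← ENNReal.tsum_mul_left]
    refine tsum_congr fun q => ?_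
    rw [ENNReal.tsum_mul_right, tsum_Ioi_pow, mul_assoc]

/-! ### Hurwitz-type multiple zeta series -/

section Hurwitz

variable {d : ℕ}

/-- The Hurwitz-type multiple zeta series `∑_{N < n₁ < ⋯ < n_d} ∏ (n_i - X)^{-c_i}`, expanded as a
power series in `X`. -/
noncomputable def hurwitzSeries (N : ℕ) (c : Fin d → ℕ) : ℝ≥0∞⟦X⟧ :=
  PowerSeries.mk fun m =>
    ∑' n : chains (· < ·) d (Ioi N), coeff m (∏ i, geomSeries (n.1 i : ℝ≥0∞)⁻¹ ^ c i)

theorem hurwitzSeries_nil (N : ℕ) (c : Fin 0 → ℕ) : hurwitzSeries N c = 1 := by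
  ext m
  rw [hurwitzSeries, coeff_mk, tsum_subtype _ fun n : Fin 0 → ℕ =>
    coeff m (∏ i, geomSeries (n i : ℝ≥0∞)⁻¹ ^ c i), tsum_fintype]
  simp [chains]

theorem coeff_hurwitzSeries_succ (N : ℕ) (c : Fin (d + 1) → ℕ) (m : ℕ) :
    coeff m (hurwitzSeries N c) = ∑' q : Ioi N,
      coeff m (geomSeries (q : ℝ≥0∞)⁻¹ ^ c 0 * hurwitzSeries q (Fin.tail c)) := by
  rw [hurwitzSeries, coeff_mk, tsum_chains_succ _ _ fun n : Fin (d + 1) → ℕ =>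
    coeff m (∏ i, geomSeries (n i : ℝ≥0∞)⁻¹ ^ c i)]
  refine tsum_congr fun q => ?_
  have hset : Ioi N ∩ {x | q.1 < x} = Ioi q.1 := Ioi_inter_Ioi.trans
    (congrArg Ioi (max_eq_right q.2.le))
  simp only [Fin.prod_univ_succ, Fin.cons_zero, Fin.cons_succ, coeff_mul]
  rw [Summable.tsum_finsetSum fun _ _ => ENNReal.summable]
  simp only [ENNReal.tsum_mul_left, hurwitzSeries, coeff_mk]
  rw [hset]
  rfl

theorem coeff_hurwitzSeries_eq_sum (N : ℕ) (c : Fin d → ℕ) (m : ℕ) :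
    coeff m (hurwitzSeries N (c ∘ Fin.rev)) = ∑ j ∈ Finset.Nat.antidiagonalTuple d m,
      ((∏ i, (c i).multichoose (j i) : ℕ) : ℝ≥0∞) * harmonicSum (fun i => c i + j i) (Ioi N) := by
  have hterm : ∀ n : Fin d → ℕ,
      coeff m (∏ i, geomSeries ((n ∘ Fin.rev) i : ℝ≥0∞)⁻¹ ^ (c ∘ Fin.rev) i) =
        ∑ j ∈ Finset.Nat.antidiagonalTuple d m, ((∏ i, (c i).multichoose (j i) : ℕ) : ℝ≥0∞) *
          ∏ i, (n i : ℝ≥0∞)⁻¹ ^ (c i + j i) := by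
    intro n
    have hrev : ∏ i, geomSeries ((n ∘ Fin.rev) i : ℝ≥0∞)⁻¹ ^ (c ∘ Fin.rev) i =
        ∏ i, geomSeries (n i : ℝ≥0∞)⁻¹ ^ c i :=
      Equiv.prod_comp Fin.revPerm fun i => geomSeries (n i : ℝ≥0∞)⁻¹ ^ c i
    rw [hrev, coeff_prod_univ_fin]
    simp only [coeff_geomSeries_pow, Finset.prod_mul_distrib, Nat.cast_prod]
  rw [hurwitzSeries, coeff_mk, tsum_chains_rev _ _ fun n : Fin d → ℕ =>
    coeff m (∏ i, geomSeries (n i : ℝ≥0∞)⁻¹ ^ (c ∘ Fin.rev) i)]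
  simp only [hterm]
  rw [Summable.tsum_finsetSum fun _ _ => ENNReal.summable]
  simp only [ENNReal.tsum_mul_left]
  rfl

end Hurwitz

/-! ### The Laplace transform -/

/-- The power series of `e^{-(n - X) t}` for `t ≥ 0`. -/
noncomputable def expSeries (n : ℕ) (t : ℝ) : ℝ≥0∞⟦X⟧ :=
  PowerSeries.mk fun m => ENNReal.ofReal (t ^ m / m.factorial) * ENNReal.ofReal (Real.exp (-t)) ^ n

/-- The density `1 / (e^u - 1)`, extended by `0` to `u ≤ 0`. -/
noncomputable def expSubOneInv (u : ℝ) : ℝ≥0∞ := ENNReal.ofReal (1 / (Real.exp u - 1))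

/-- The Laplace transform of `f` at `n - X`, expanded as a power series in `X`. -/
noncomputable def laplaceSeries (n : ℕ) (f : ℝ → ℝ≥0∞) : ℝ≥0∞⟦X⟧ :=
  PowerSeries.mk fun m => ∫⁻ t in Ioi (0 : ℝ), coeff m (expSeries n t) * f t

@[fun_prop]
theorem measurable_coeff_expSeries (m n : ℕ) : Measurable fun t => coeff m (expSeries n t) := by
  simp only [expSeries, coeff_mk]
  fun_prop

@[fun_prop]
theorem measurable_expSubOneInv : Measurable expSubOneInv := by
  unfold expSubOneInv
  fun_prop

theorem add_pow_div_factorial (u v : ℝ) (m : ℕ) :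
    (u + v) ^ m / m.factorial = ∑ p ∈ Finset.HasAntidiagonal.antidiagonal m,
      u ^ p.1 / p.1.factorial * (v ^ p.2 / p.2.factorial) := by
  rw [(Commute.all u v).add_pow', Finset.sum_div]
  refine Finset.sum_congr rfl fun p hp => ?_
  obtain rfl := Finset.HasAntidiagonal.mem_antidiagonal.mp hp
  rw [nsmul_eq_mul, Nat.cast_add_choose]
  field_simp

theorem expSeries_add (n : ℕ) {u v : ℝ} (hu : 0 ≤ u) (hv : 0 ≤ v) :
    expSeries n (u + v) = expSeries n u * expSeries n v := by
  ext m
  have hexp : ENNReal.ofReal (Real.exp (-(u + v))) =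
      ENNReal.ofReal (Real.exp (-u)) * ENNReal.ofReal (Real.exp (-v)) := by
    rw [neg_add, Real.exp_add, ENNReal.ofReal_mul (Real.exp_pos _).le]
  simp only [coeff_mul, expSeries, coeff_mk, hexp]
  rw [add_pow_div_factorial, ENNReal.ofReal_sum_of_nonneg fun p _ => by positivity, Finset.sum_mul]
  refine Finset.sum_congr rfl fun p _ => ?_
  rw [ENNReal.ofReal_mul (by positivity)]
  ring

theorem integral_pow_mul_exp_neg_mul_Ioi (m : ℕ) {r : ℝ} (hr : 0 < r) :
    ∫ t in Ioi (0 : ℝ), t ^ m * Real.exp (-(r * t)) = r⁻¹ ^ (m + 1) * m.factorial := by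
  have hgamma := Real.integral_rpow_mul_exp_neg_mul_Ioi (a := m + 1) (by positivity) hr
  rw [Real.Gamma_nat_eq_factorial, add_sub_cancel_right, one_div, ← Nat.cast_succ,
    Real.rpow_natCast] at hgamma
  simpa only [Real.rpow_natCast] using hgamma

theorem laplaceSeries_one {n : ℕ} (hn : 0 < n) :
    laplaceSeries n (fun _ => 1) = geomSeries (n : ℝ≥0∞)⁻¹ := by
  ext m
  have hn' : (0 : ℝ) < n := Nat.cast_pos.mpr hn
  have hintegral : ∫ t in Ioi (0 : ℝ), t ^ m / m.factorial * Real.exp (-(n * t)) =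
      (n : ℝ)⁻¹ ^ (m + 1) := by
    simp only [div_mul_eq_mul_div]
    rw [integral_div, integral_pow_mul_exp_neg_mul_Ioi m hn',
      mul_div_cancel_right₀ _ (by positivity)]
  have hintegrable :
      IntegrableOn (fun t : ℝ => t ^ m / m.factorial * Real.exp (-(n * t))) (Ioi 0) :=
    Integrable.of_integral_ne_zero (by rw [hintegral]; positivity)
  have hintegrand : ∀ t ∈ Ioi (0 : ℝ), coeff m (expSeries n t) * 1 =
      ENNReal.ofReal (t ^ m / m.factorial * Real.exp (-(n * t))) := by
    intro t ht
    have ht' : 0 < t := ht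
    rw [mul_one, expSeries, coeff_mk, ← ENNReal.ofReal_pow (Real.exp_pos _).le,
      ← Real.exp_nat_mul, mul_neg, ENNReal.ofReal_mul (by positivity)]
  rw [laplaceSeries, coeff_mk, setLIntegral_congr_fun measurableSet_Ioi hintegrand,
    ← ofReal_integral_eq_lintegral_ofReal hintegrable, hintegral, geomSeries, coeff_mk,
    ENNReal.ofReal_pow (by positivity), ENNReal.ofReal_inv_of_pos hn', ENNReal.ofReal_natCast]
  filter_upwards [ae_restrict_mem measurableSet_Ioi] with t ht
  have ht' : 0 < t := ht
  simp only [Pi.zero_apply]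
  positivity

theorem lintegral_Ioi_coeff_expSeries {n : ℕ} (hn : 0 < n) (m : ℕ) {u : ℝ} (hu : 0 ≤ u) :
    ∫⁻ t in Ioi u, coeff m (expSeries n t) =
      coeff m (expSeries n u * geomSeries (n : ℝ≥0∞)⁻¹) := by
  have htranslate : ∫⁻ t in Ioi u, coeff m (expSeries n t) =
      ∫⁻ v in Ioi 0, coeff m (expSeries n (u + v)) := by
    have h := (measurePreserving_add_left volume u).setLIntegral_comp_preimage
      (s := Ioi u) measurableSet_Ioi (measurable_coeff_expSeries m n)
    rw [← h, preimage_const_add_Ioi, sub_self]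
  have hadd : ∀ v ∈ Ioi (0 : ℝ), coeff m (expSeries n (u + v)) =
      ∑ p ∈ Finset.HasAntidiagonal.antidiagonal m,
        coeff p.1 (expSeries n u) * (coeff p.2 (expSeries n v) * 1) := by
    intro v hv
    simp only [expSeries_add n hu (le_of_lt hv), coeff_mul, mul_one]
  rw [htranslate, setLIntegral_congr_fun measurableSet_Ioi hadd,
    lintegral_finsetSum _ fun p _ => by fun_prop, coeff_mul]
  refine Finset.sum_congr rfl fun p _ => ?_
  rw [lintegral_const_mul _ (by fun_prop), ← laplaceSeries_one hn, laplaceSeries, coeff_mk]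

theorem lintegral_Ioi_mul_lintegral_Ioo {f h : ℝ → ℝ≥0∞} (hf : Measurable f)
    (hh : Measurable h) :
    ∫⁻ t in Ioi (0 : ℝ), f t * ∫⁻ u in Ioo 0 t, h u =
      ∫⁻ u in Ioi (0 : ℝ), h u * ∫⁻ t in Ioi u, f t := by
  let K : ℝ × ℝ → ℝ≥0∞ := {p | p.2 < p.1}.indicator fun p => f p.1 * h p.2
  have hK : Measurable K :=
    (by fun_prop : Measurable fun p : ℝ × ℝ => f p.1 * h p.2).indicator
      (measurableSet_lt measurable_snd measurable_fst)
  have hleft : ∀ t, f t * ∫⁻ u in Ioo 0 t, h u = ∫⁻ u in Ioi 0, K (t, u) := by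
    intro t
    rw [← lintegral_const_mul _ hh, ← Iio_inter_Ioi, ← setLIntegral_indicator measurableSet_Iio]
    rfl
  have hright : ∀ u ∈ Ioi (0 : ℝ), h u * ∫⁻ t in Ioi u, f t = ∫⁻ t in Ioi 0, K (t, u) := by
    intro u hu
    rw [← lintegral_const_mul _ hf, ← inter_eq_left.mpr (Ioi_subset_Ioi (le_of_lt hu)),
      ← setLIntegral_indicator measurableSet_Ioi]
    simp only [mul_comm (h u)]
    rfl
  simp only [hleft]
  rw [setLIntegral_congr_fun measurableSet_Ioi hright,
    lintegral_lintegral_swap (f := fun t u => K (t, u)) hK.aemeasurable]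

theorem laplaceSeries_lintegral_Ioo {n : ℕ} (hn : 0 < n) {f : ℝ → ℝ≥0∞} (hf : Measurable f) :
    laplaceSeries n (fun t => ∫⁻ u in Ioo 0 t, f u) =
      laplaceSeries n f * geomSeries (n : ℝ≥0∞)⁻¹ := by
  ext m
  have htail : ∀ u ∈ Ioi (0 : ℝ), f u * ∫⁻ t in Ioi u, coeff m (expSeries n t) =
      ∑ p ∈ Finset.HasAntidiagonal.antidiagonal m,
        coeff p.1 (expSeries n u) * f u * coeff p.2 (geomSeries (n : ℝ≥0∞)⁻¹) := by
    intro u hu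
    rw [lintegral_Ioi_coeff_expSeries hn m (le_of_lt hu), coeff_mul, Finset.mul_sum]
    exact Finset.sum_congr rfl fun p _ => by ring
  rw [laplaceSeries, coeff_mk, lintegral_Ioi_mul_lintegral_Ioo (by fun_prop) hf,
    setLIntegral_congr_fun measurableSet_Ioi htail,
    lintegral_finsetSum _ fun p _ => by fun_prop, coeff_mul]
  refine Finset.sum_congr rfl fun p _ => ?_
  rw [lintegral_mul_const _ (by fun_prop), laplaceSeries, coeff_mk]

theorem ofReal_one_sub_exp_neg (u : ℝ) :
    ENNReal.ofReal (1 - Real.exp (-u)) = 1 - ENNReal.ofReal (Real.exp (-u)) := by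
  rw [ENNReal.ofReal_sub _ (Real.exp_pos _).le, ENNReal.ofReal_one]

theorem expSubOneInv_eq {u : ℝ} (hu : 0 < u) :
    expSubOneInv u =
      ENNReal.ofReal (Real.exp (-u)) * (1 - ENNReal.ofReal (Real.exp (-u)))⁻¹ := by
  have hpos : 0 < 1 - Real.exp (-u) := sub_pos.mpr (Real.exp_lt_one_iff.mpr (neg_lt_zero.mpr hu))
  have hinv : 1 / (Real.exp u - 1) = Real.exp (-u) * (1 - Real.exp (-u))⁻¹ := by
    have hpos' : 0 < Real.exp u - 1 := sub_pos.mpr (Real.one_lt_exp_iff.mpr hu)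
    rw [← div_eq_mul_inv, div_eq_div_iff hpos'.ne' hpos.ne', mul_sub (Real.exp _),
      ← Real.exp_add]
    simp
  rw [expSubOneInv, hinv, ENNReal.ofReal_mul (Real.exp_pos _).le, ENNReal.ofReal_inv_of_pos hpos,
    ofReal_one_sub_exp_neg]

theorem coeff_laplaceSeries_mul_expSubOneInv (n m : ℕ) {f : ℝ → ℝ≥0∞} (hf : Measurable f) :
    coeff m (laplaceSeries n fun u => f u * expSubOneInv u) =
      ∑' q : Ioi n, coeff m (laplaceSeries q f) := by
  have hgeom : ∀ u ∈ Ioi (0 : ℝ), coeff m (expSeries n u) * (f u * expSubOneInv u) =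
      ∑' q : Ioi n, coeff m (expSeries q u) * f u := by
    intro u hu
    simp only [expSeries, coeff_mk]
    rw [ENNReal.tsum_mul_right, ENNReal.tsum_mul_left, tsum_Ioi_pow, expSubOneInv_eq hu]
    ring
  simp only [laplaceSeries, coeff_mk]
  rw [setLIntegral_congr_fun measurableSet_Ioi hgeom,
    lintegral_tsum fun q => (by fun_prop : Measurable _).aemeasurable]

/-! ### Iterated integrals -/

/-- The iterated integral along a word in the forms `du / (e^u - 1)` (letter `true`) and `du`
(letter `false`), the first letter being the outermost integration. -/
noncomputable def iterInt : List Bool → ℝ → ℝ≥0∞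
  | [], _ => 1
  | true :: w, t => ∫⁻ u in Ioo 0 t, iterInt w u * expSubOneInv u
  | false :: w, t => ∫⁻ u in Ioo 0 t, iterInt w u

theorem monotone_iterInt (w : List Bool) : Monotone (iterInt w) := by
  intro s t hst
  rcases w with _ | ⟨_ | _, w⟩
  · exact le_rfl
  · exact lintegral_mono_set (Ioo_subset_Ioo_right hst)
  · exact lintegral_mono_set (Ioo_subset_Ioo_right hst)

@[fun_prop]
theorem measurable_iterInt (w : List Bool) : Measurable (iterInt w) :=
  (monotone_iterInt w).measurable

theorem one_sub_exp_neg_mul_expSubOneInv {u : ℝ} (hu : 0 < u) :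
    ENNReal.ofReal (1 - Real.exp (-u)) * expSubOneInv u = ENNReal.ofReal (Real.exp (-u)) := by
  have hpos : 0 < 1 - Real.exp (-u) := sub_pos.mpr (Real.exp_lt_one_iff.mpr (neg_lt_zero.mpr hu))
  rw [expSubOneInv_eq hu, ← ofReal_one_sub_exp_neg, mul_left_comm, ENNReal.mul_inv_cancel
    (ENNReal.ofReal_pos.mpr hpos).ne' ENNReal.ofReal_ne_top, mul_one]

theorem lintegral_Ioo_one_sub_exp_neg_pow {p : ℕ} (hp : 0 < p) {t : ℝ} (ht : 0 < t) :
    ∫⁻ u in Ioo 0 t, ENNReal.ofReal (1 - Real.exp (-u)) ^ p * expSubOneInv u =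
      ENNReal.ofReal (1 - Real.exp (-t)) ^ p * (p : ℝ≥0∞)⁻¹ := by
  obtain ⟨p, rfl⟩ := Nat.exists_eq_succ_of_ne_zero hp.ne'
  have hnonneg : ∀ {u : ℝ}, 0 < u → 0 ≤ 1 - Real.exp (-u) := fun hu =>
    sub_nonneg.mpr (Real.exp_le_one_iff.mpr (neg_nonpos.mpr hu.le))
  have hintegrand : ∀ u ∈ Ioo 0 t, ENNReal.ofReal (1 - Real.exp (-u)) ^ (p + 1) * expSubOneInv u =
      ENNReal.ofReal ((1 - Real.exp (-u)) ^ p * Real.exp (-u)) := fun u hu => by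
    rw [pow_succ, mul_assoc, one_sub_exp_neg_mul_expSubOneInv hu.1,
      ENNReal.ofReal_mul (pow_nonneg (hnonneg hu.1) p), ENNReal.ofReal_pow (hnonneg hu.1)]
  have hderiv : ∀ u ∈ uIcc 0 t, HasDerivAt (fun u => (1 - Real.exp (-u)) ^ (p + 1) / (p + 1 : ℝ))
      ((1 - Real.exp (-u)) ^ p * Real.exp (-u)) u := by
    intro u _
    have hexp : HasDerivAt (fun u : ℝ => 1 - Real.exp (-u)) (Real.exp (-u)) u := by
      simpa using (hasDerivAt_neg u).exp.const_sub 1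
    refine ((hexp.pow (p + 1)).div_const (p + 1 : ℝ)).congr_deriv ?_
    push_cast
    field_simp
  have hintegral : ∫ u in Ioc 0 t, (1 - Real.exp (-u)) ^ p * Real.exp (-u) =
      (1 - Real.exp (-t)) ^ (p + 1) / (p + 1 : ℝ) := by
    rw [← intervalIntegral.integral_of_le ht.le, intervalIntegral.integral_eq_sub_of_hasDerivAt
      hderiv ((by fun_prop : Continuous _).intervalIntegrable _ _)]
    simp
  rw [setLIntegral_congr_fun measurableSet_Ioo hintegrand,
    Measure.restrict_congr_set Ioo_ae_eq_Ioc, ← ofReal_integral_eq_lintegral_ofReal, hintegral,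
    div_eq_mul_inv, ENNReal.ofReal_mul (pow_nonneg (hnonneg ht) _),
    ENNReal.ofReal_pow (hnonneg ht), ENNReal.ofReal_inv_of_pos (by positivity), ← Nat.cast_succ,
    ENNReal.ofReal_natCast]
  · exact (by fun_prop : Continuous _).integrableOn_Ioc
  · filter_upwards [ae_restrict_mem measurableSet_Ioc] with u hu
    exact mul_nonneg (pow_nonneg (hnonneg hu.1) p) (Real.exp_pos _).le

theorem polylog_one_sub_exp_neg_succ_cons (a : ℕ) (ks : List ℕ) {t : ℝ} (ht : 0 < t) :
    polylog ((a + 1) :: ks) (ENNReal.ofReal (1 - Real.exp (-t))) =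
      ∫⁻ u in Ioo 0 t,
        polylog (a :: ks) (ENNReal.ofReal (1 - Real.exp (-u))) * expSubOneInv u := by
  have hterm : ∀ (p : Ioi (0 : ℕ)) (u : ℝ),
      ENNReal.ofReal (1 - Real.exp (-u)) ^ p.1 *
          ((p : ℝ≥0∞)⁻¹ ^ a * harmonicSum ks.get (Ioo 0 p)) * expSubOneInv u =
        ENNReal.ofReal (1 - Real.exp (-u)) ^ p.1 * expSubOneInv u *
          ((p : ℝ≥0∞)⁻¹ ^ a * harmonicSum ks.get (Ioo 0 p)) := fun p u => mul_right_comm _ _ _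
  simp only [polylog, ← ENNReal.tsum_mul_right, hterm]
  rw [lintegral_tsum fun p => (by fun_prop : Measurable _).aemeasurable]
  refine tsum_congr fun p => ?_
  rw [lintegral_mul_const _ (by fun_prop), lintegral_Ioo_one_sub_exp_neg_pow p.2 ht, pow_succ]
  ring

theorem polylog_one_sub_exp_neg_one_cons (ks : List ℕ) {t : ℝ} (ht : 0 < t) :
    polylog (1 :: ks) (ENNReal.ofReal (1 - Real.exp (-t))) =
      ∫⁻ u in Ioo 0 t, polylog ks (ENNReal.ofReal (1 - Real.exp (-u))) := by
  rw [← Nat.zero_add 1, polylog_one_sub_exp_neg_succ_cons 0 ks ht]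
  refine setLIntegral_congr_fun measurableSet_Ioo fun u hu => ?_
  have hcancel :
      (1 - ENNReal.ofReal (1 - Real.exp (-u)))⁻¹ * ENNReal.ofReal (Real.exp (-u)) = 1 := by
    rw [ofReal_one_sub_exp_neg, ENNReal.sub_sub_cancel ENNReal.one_ne_top
      (ENNReal.ofReal_le_one.mpr (Real.exp_le_one_iff.mpr (neg_nonpos.mpr hu.1.le)))]
    exact ENNReal.inv_mul_cancel (ENNReal.ofReal_pos.mpr (Real.exp_pos _)).ne'
      ENNReal.ofReal_ne_top
  calc polylog (0 :: ks) (ENNReal.ofReal (1 - Real.exp (-u))) * expSubOneInv u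
      = (1 - ENNReal.ofReal (1 - Real.exp (-u)))⁻¹ *
          (ENNReal.ofReal (1 - Real.exp (-u)) * expSubOneInv u) *
            polylog ks (ENNReal.ofReal (1 - Real.exp (-u))) := by
        rw [polylog_zero_cons]
        ring
    _ = polylog ks (ENNReal.ofReal (1 - Real.exp (-u))) := by
        rw [one_sub_exp_neg_mul_expSubOneInv hu.1, hcancel, one_mul]

theorem polylog_one_sub_exp_neg {k : List ℕ} (hpos : ∀ a ∈ k, 0 < a) :
    ∀ t : ℝ, 0 < t →
      polylog k (ENNReal.ofReal (1 - Real.exp (-t))) = iterInt (polylogWord k) t := by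
  induction k with
  | nil => exact fun _ _ => rfl
  | cons a ks ih =>
    have ih := ih fun b hb => hpos b (List.mem_cons_of_mem _ hb)
    obtain ⟨b, rfl⟩ := Nat.exists_eq_add_of_lt (hpos a List.mem_cons_self)
    have hcons : ∀ (b : ℕ) (t : ℝ), 0 < t →
        polylog ((b + 1) :: ks) (ENNReal.ofReal (1 - Real.exp (-t))) =
          iterInt (List.replicate b true ++ false :: polylogWord ks) t := by
      intro b
      induction b with
      | zero =>
        intro t ht
        rw [polylog_one_sub_exp_neg_one_cons ks ht]
        exact setLIntegral_congr_fun measurableSet_Ioo fun u hu => ih u hu.1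
      | succ b ihb =>
        intro t ht
        rw [polylog_one_sub_exp_neg_succ_cons _ ks ht]
        exact setLIntegral_congr_fun measurableSet_Ioo fun u hu =>
          congrArg (· * expSubOneInv u) (ihb u hu.1)
    intro t ht
    simpa [polylogWord] using hcons b t ht

theorem laplaceSeries_mul_expSubOneInv (n : ℕ) {f : ℝ → ℝ≥0∞} (hf : Measurable f) {c : ℕ}
    {cs : List ℕ} (hlaplace : ∀ q : ℕ, 0 < q →
      laplaceSeries q f = geomSeries (q : ℝ≥0∞)⁻¹ ^ c * hurwitzSeries q cs.get) :
    laplaceSeries n (fun u => f u * expSubOneInv u) = hurwitzSeries n (c :: cs).get := by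
  ext m
  rw [coeff_laplaceSeries_mul_expSubOneInv n m hf, coeff_hurwitzSeries_succ]
  refine tsum_congr fun q => ?_
  rw [hlaplace q (Nat.zero_lt_of_lt q.2)]
  rfl

theorem laplaceSeries_iterInt {w : List Bool} {c : ℕ} {cs : List ℕ} (hw : fromWord w = c :: cs)
    {n : ℕ} (hn : 0 < n) :
    laplaceSeries n (iterInt w) = geomSeries (n : ℝ≥0∞)⁻¹ ^ c * hurwitzSeries n cs.get := by
  induction w generalizing c cs n with
  | nil =>
    obtain ⟨rfl, rfl⟩ := List.cons.inj hw
    rw [pow_one, hurwitzSeries_nil, mul_one]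
    exact laplaceSeries_one hn
  | cons b w ih =>
    obtain ⟨a, as, has⟩ := List.exists_cons_of_ne_nil (fromWord_ne_nil w)
    cases b with
    | false =>
      rw [fromWord_false, has] at hw
      obtain ⟨rfl, rfl⟩ := List.cons.inj hw
      refine (laplaceSeries_lintegral_Ioo hn (measurable_iterInt w)).trans ?_
      rw [ih has hn, pow_succ, mul_right_comm]
    | true =>
      rw [fromWord_true, has] at hw
      obtain ⟨rfl, rfl⟩ := List.cons.inj hw
      refine (laplaceSeries_lintegral_Ioo hn (by fun_prop)).trans ?_
      rw [laplaceSeries_mul_expSubOneInv n (by fun_prop) fun q hq => ih has hq, pow_one, mul_comm]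

theorem laplaceSeries_iterInt_mul_expSubOneInv (w : List Bool) (n : ℕ) :
    laplaceSeries n (fun u => iterInt w u * expSubOneInv u) =
      hurwitzSeries n (fromWord w).get := by
  obtain ⟨c, cs, hw⟩ := List.exists_cons_of_ne_nil (fromWord_ne_nil w)
  rw [hw]
  exact laplaceSeries_mul_expSubOneInv n (by fun_prop) fun _ hq => laplaceSeries_iterInt hw hq

/-! ### The Arakawa–Kaneko zeta function -/

section Xi

theorem xiAK_eq_toReal_laplaceSeries {k : List ℕ} (hpos : ∀ a ∈ k, 0 < a) {m : ℕ}
    (hfin : coeff m (laplaceSeries 0 fun u => iterInt (polylogWord k) u * expSubOneInv u) ≠ ∞) :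
    xiAK (m + 1) k = ((coeff m
      (laplaceSeries 0 fun u => iterInt (polylogWord k) u * expSubOneInv u)).toReal : ℂ) := by
  let φ : ℝ → ℝ≥0∞ := fun t =>
    coeff m (expSeries 0 t) * (iterInt (polylogWord k) t * expSubOneInv t)
  have hφ : Measurable φ := by fun_prop
  have hfact : (m.factorial : ℂ) ≠ 0 := Nat.cast_ne_zero.mpr m.factorial_ne_zero
  rw [laplaceSeries, coeff_mk] at hfin ⊢
  have hintegrand : ∀ t ∈ Ioi (0 : ℝ), (t : ℂ) ^ ((m + 1 : ℂ) - 1) / ((Real.exp t : ℂ) - 1) *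
      (MPL k (1 - Real.exp (-t)) : ℂ) = (m.factorial : ℂ) * ((φ t).toReal : ℂ) := by
    intro t ht
    have ht' : 0 < t := ht
    have hdensity : 0 ≤ 1 / (Real.exp t - 1) :=
      one_div_nonneg.mpr (sub_nonneg.mpr (Real.one_le_exp ht'.le))
    rw [MPL_eq_toReal_polylog k
        (sub_nonneg.mpr (Real.exp_le_one_iff.mpr (neg_nonpos.mpr ht'.le))),
      polylog_one_sub_exp_neg hpos t ht', add_sub_cancel_right, Complex.cpow_natCast]
    simp only [φ, expSeries, coeff_mk, expSubOneInv, ENNReal.toReal_mul, pow_zero, mul_one,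
      ENNReal.toReal_ofReal hdensity,
      ENNReal.toReal_ofReal (by positivity : 0 ≤ t ^ m / m.factorial)]
    push_cast
    field_simp
  rw [xiAK, setIntegral_congr_fun measurableSet_Ioi hintegrand, integral_const_mul,
    integral_complex_ofReal, integral_toReal hφ.aemeasurable (ae_lt_top hφ hfin),
    Complex.Gamma_nat_eq_factorial, one_div, inv_mul_cancel_left₀ hfact]

theorem xiAK_eq_toReal_hurwitzSeries {k : List ℕ} (hpos : ∀ a ∈ k, 0 < a) {m : ℕ}
    (hfin : coeff m (hurwitzSeries 0 (fromWord (polylogWord k)).get) ≠ ∞) :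
    xiAK (m + 1) k =
      ((coeff m (hurwitzSeries 0 (fromWord (polylogWord k)).get)).toReal : ℂ) := by
  rw [← laplaceSeries_iterInt_mul_expSubOneInv] at hfin ⊢
  exact xiAK_eq_toReal_laplaceSeries hpos hfin

variable {d : ℕ} {c : Fin d → ℕ}

theorem harmonicSum_add_ne_top (hpos : ∀ i, 0 < c i) (hhead : ∀ i : Fin d, (i : ℕ) = 0 → 2 ≤ c i)
    (j : Fin d → ℕ) : harmonicSum (fun i => c i + j i) (Ioi 0) ≠ ∞ := by
  cases d with
  | zero => simp [harmonicSum_nil]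
  | succ d =>
    exact harmonicSum_ne_top (fun i => Nat.add_pos_left (hpos i) _)
      ((hhead 0 rfl).trans (Nat.le_add_right _ _))

theorem coeff_hurwitzSeries_ne_top (hpos : ∀ i, 0 < c i)
    (hhead : ∀ i : Fin d, (i : ℕ) = 0 → 2 ≤ c i) (m : ℕ) :
    coeff m (hurwitzSeries 0 (c ∘ Fin.rev)) ≠ ∞ := by
  rw [coeff_hurwitzSeries_eq_sum]
  exact ENNReal.sum_ne_top.mpr fun j _ =>
    ENNReal.mul_ne_top (ENNReal.natCast_ne_top _) (harmonicSum_add_ne_top hpos hhead j)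

theorem toReal_coeff_hurwitzSeries (hpos : ∀ i, 0 < c i)
    (hhead : ∀ i : Fin d, (i : ℕ) = 0 → 2 ≤ c i) (m : ℕ) :
    (coeff m (hurwitzSeries 0 (c ∘ Fin.rev))).toReal =
      ∑ j ∈ Finset.Nat.antidiagonalTuple d m, ((∏ i, (c i + j i - 1).choose (j i) : ℕ) : ℝ) *
        MZV (List.ofFn fun i => c i + j i) := by
  rw [coeff_hurwitzSeries_eq_sum, ENNReal.toReal_sum fun j _ =>
    ENNReal.mul_ne_top (ENNReal.natCast_ne_top _) (harmonicSum_add_ne_top hpos hhead j)]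
  simp only [ENNReal.toReal_mul, ENNReal.toReal_natCast, MZV_ofFn, Nat.multichoose_eq]

theorem hurwitzSeries_get_eq_reverse (N : ℕ) {l : List ℕ} (hl : l.length = d) :
    hurwitzSeries N l.get =
      hurwitzSeries N ((fun i : Fin d => l.reverse.getD i 0) ∘ Fin.rev) := by
  subst hl
  congr 1
  funext i
  rw [Function.comp_apply, List.getD_eq_getElem _ _ (by simpa using i.pos), List.getElem_reverse,
    List.get_eq_getElem]
  congr 1
  simp only [Fin.val_rev]
  omega

end Xi

end ArakawaKaneko

theorem stmt9 (k : List ℕ) (hk : k ≠ []) (hkpos : ∀ a ∈ k, 0 < a) (m : ℕ) :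
    xiAK (m + 1) k =
      ∑ j ∈ Finset.Nat.antidiagonalTuple (k.sum + 1 - k.length) m,
        ((∏ i : Fin (k.sum + 1 - k.length), Nat.choose
            ((plusOne (HDual k.reverse)).getD (i : ℕ) 0 + j i - 1) (j i) : ℕ) : ℂ) *
          ((MZV (List.ofFn fun i : Fin (k.sum + 1 - k.length) =>
            (plusOne (HDual k.reverse)).getD (i : ℕ) 0 + j i) : ℝ) : ℂ) := by
  have hlen := ArakawaKaneko.length_fromWord_polylogWord hkpos
  have hdual := ArakawaKaneko.plusOne_HDual_reverse hk
  have hseries := ArakawaKaneko.hurwitzSeries_get_eq_reverse 0 hlen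
  rw [← hdual] at hseries
  have hpos : ∀ i : Fin (k.sum + 1 - k.length), 0 < (plusOne (HDual k.reverse)).getD i 0 :=
    fun i => ArakawaKaneko.getD_plusOne_HDual_pos k.reverse (by simp [hdual, hlen])
  have hhead : ∀ i : Fin (k.sum + 1 - k.length), (i : ℕ) = 0 →
      2 ≤ (plusOne (HDual k.reverse)).getD i 0 :=
    fun i hi => hi ▸ ArakawaKaneko.two_le_getD_plusOne_HDual_zero k.reverse
  rw [ArakawaKaneko.xiAK_eq_toReal_hurwitzSeries hkpos, hseries,
    ArakawaKaneko.toReal_coeff_hurwitzSeries hpos hhead]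
  · push_cast
    rfl
  · rw [hseries]
    exact ArakawaKaneko.coeff_hurwitzSeries_ne_top hpos hhead m
end

section
/- Let k=(k_1,…,k_r) be a composition, let m∈ℕ_0, and set n=|k|+1−dep(k). Then ψ(m+1;k) = Σ_{|j|=m, dep(j)=n} B((←k^∨)_+; j)·T((←k^∨)_+ + j), where the sum is over j∈ℕ_0^n with j_1+⋯+j_n=m. -/
open scoped BigOperators
open MeasureTheory

/-!
The generating function of the values `ψ(m + 1; k)` is
`∑ₘ ψ(m + 1; k) u ^ m = ∫₀^∞ e^{ut} A(k; tanh (t / 2)) dt / sinh t`.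
Under `x = tanh (t / 2)` the forms `2 dx / (1 - x²)` and `dx / x` of the iterated integral for
`A(k; x)` become `dt` and `dt / sinh t`, so the right-hand side is an iterated integral over
`t > t₁ > ⋯ > t_p > 0`. Integrating from the outermost variable inwards and expanding in the kernels
`e^{-(n - u) t}`, one finds that `dt` divides the `n`-th term by `n - u`, while `dt / sinh t` shifts
`n` by odd gaps as well: the two forms exchange their roles and the word is read backwards. The
outcome is the sum `2 ^ dep(l) ∑ ∏ᵢ (nᵢ - u)^{-lᵢ}` of `T`-value type for `l = (←k^∨)_+`. It remains
to expand each `(nᵢ - u)^{-lᵢ}` by the binomial series and to compare the coefficients of `u ^ m`.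
All terms are nonnegative for `0 ≤ u < 1`, so sums and integrals are taken in `[0, ∞]`, where they
can be exchanged freely.
-/

section Words

theorem fromWord_ne_nil (w : List Bool) : fromWord w ≠ [] := by
  rcases w with _ | ⟨_ | _, w⟩
  · exact List.cons_ne_nil _ _
  · cases h : fromWord w <;> simp only [fromWord, h] <;> exact List.cons_ne_nil _ _
  · exact List.cons_ne_nil _ _

theorem fromWord_false_cons (w : List Bool) :
    fromWord (false :: w) = plusOne (fromWord w) := by
  cases h : fromWord w with
  | nil => exact absurd h (fromWord_ne_nil w)
  | cons a l => simp only [fromWord, h, plusOne]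

theorem fromWord_replicate (n : ℕ) : fromWord (List.replicate n false) = [n + 1] := by
  induction n with
  | zero => rfl
  | succ n ih => rw [List.replicate_succ, fromWord_false_cons, ih, plusOne]

theorem fromWord_replicate_append_true_cons (n : ℕ) (w : List Bool) :
    fromWord (List.replicate n false ++ true :: w) = (n + 1) :: fromWord w := by
  induction n with
  | zero => rfl
  | succ n ih => rw [List.replicate_succ, List.cons_append, fromWord_false_cons, ih, plusOne]

theorem length_plusOne (l : List ℕ) : (plusOne l).length = l.length := by
  cases l <;> rfl

theorem sum_plusOne {l : List ℕ} (hl : l ≠ []) : (plusOne l).sum = l.sum + 1 := by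
  cases l with
  | nil => exact absurd rfl hl
  | cons a l => simp only [plusOne, List.sum_cons]; omega

theorem length_fromWord (w : List Bool) : (fromWord w).length = w.count true + 1 := by
  induction w with
  | nil => rfl
  | cons b w ih =>
    cases b
    · rw [fromWord_false_cons, length_plusOne, ih]; simp
    · simp [fromWord, ih]

theorem sum_fromWord (w : List Bool) : (fromWord w).sum = w.length + 1 := by
  induction w with
  | nil => rfl
  | cons b w ih =>
    cases b
    · rw [fromWord_false_cons, sum_plusOne (fromWord_ne_nil w), ih, List.length_cons]
    · simp only [fromWord, List.sum_cons, ih, List.length_cons]; omega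

theorem toWord_append {k l : List ℕ} (hk : k ≠ []) (hl : l ≠ []) :
    toWord (k ++ l) = toWord k ++ true :: toWord l := by
  induction k with
  | nil => exact absurd rfl hk
  | cons a k ih =>
    cases k with
    | nil => obtain ⟨b, l, rfl⟩ := List.exists_cons_of_ne_nil hl; rfl
    | cons b k =>
      have ih' := ih (List.cons_ne_nil b k)
      simp only [List.cons_append] at ih'
      simp only [List.cons_append, toWord, ih', List.append_assoc]

theorem toWord_reverse (k : List ℕ) : toWord k.reverse = (toWord k).reverse := by
  induction k with
  | nil => rfl
  | cons a k ih =>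
    rcases eq_or_ne k [] with rfl | hk
    · simp [toWord]
    · rw [List.reverse_cons, toWord_append (List.reverse_ne_nil_iff.2 hk) (List.cons_ne_nil _ _),
        ih, ← List.singleton_append (x := a) (l := k), toWord_append (List.cons_ne_nil _ _) hk]
      simp [toWord]

theorem fromWord_toWord {k : List ℕ} (hk : k ≠ []) (hpos : ∀ a ∈ k, 0 < a) :
    fromWord (toWord k) = k := by
  induction k with
  | nil => exact absurd rfl hk
  | cons a k ih =>
    have ha : a - 1 + 1 = a := Nat.sub_add_cancel (hpos a List.mem_cons_self)
    cases k with
    | nil => rw [toWord, fromWord_replicate, ha]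
    | cons b k =>
      rw [toWord, fromWord_replicate_append_true_cons, ha,
        ih (List.cons_ne_nil _ _) fun c hc => hpos c (List.mem_cons_of_mem a hc)]

theorem plusOne_HDual_reverse (k : List ℕ) :
    plusOne (HDual k.reverse) = fromWord (false :: (toWord k).reverse.map (!·)) := by
  rw [fromWord_false_cons, HDual, toWord_reverse]

theorem length_plusOne_HDual_reverse {k : List ℕ} (hk : k ≠ []) (hpos : ∀ a ∈ k, 0 < a) :
    (plusOne (HDual k.reverse)).length = k.sum + 1 - k.length := by
  have hcount (w : List Bool) : (w.map (!·)).count true = w.count false :=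
    List.count_map_of_injective w (!·) (fun _ _ => Bool.not_inj) false
  have hsum := sum_fromWord (toWord k)
  have hlen := length_fromWord (toWord k)
  rw [fromWord_toWord hk hpos] at hsum hlen
  have hw := List.count_true_add_count_false (l := toWord k)
  rw [length_plusOne, HDual, length_fromWord, toWord_reverse, hcount, List.count_reverse]
  omega

end Words

section LevelTwo

open scoped ENNReal

section Series

/-- The indicator of `n - q` being a positive odd number, the relation between consecutive indices
`n = n_i`, `q = n_{i+1}` of a level-two sum. -/
noncomputable def oddGap (q n : ℕ) : ℝ≥0∞ := if q < n ∧ Odd (n - q) then 1 else 0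

/-- The sum `2^r ∑_{n = n₁ > ⋯ > n_r > 0} ∏ᵢ (n_i - u)^{-k_i}` over `n_i ≡ r + 1 - i (mod 2)` with
fixed largest index `n`. The congruences are encoded by the convention `n_{r+1} = 0` and the
requirement that consecutive indices differ by an odd number. -/
noncomputable def tCoeff (u : ℝ) : List ℕ → ℕ → ℝ≥0∞
  | [], n => if n = 0 then 1 else 0
  | a :: l, n => ENNReal.ofReal (n - u)⁻¹ ^ a * (2 * ∑' q, oddGap q n * tCoeff u l q)

/-- The level-two sum with summand `g n₁ ∏ᵢ (n_i - u)^{-k_i}`. It specializes to the polylogarithm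
`A(k; x)` for `u = 0` and `g n = x ^ n`, and to the Hurwitz-type `T`-value `T(k; 1 - u)` for
`g = 1`. -/
noncomputable def tSeries (u : ℝ) (k : List ℕ) (g : ℕ → ℝ≥0∞) : ℝ≥0∞ :=
  ∑' n, g n * tCoeff u k n

variable {u : ℝ}

theorem tCoeff_cons_zero (a : ℕ) (l : List ℕ) : tCoeff u (a :: l) 0 = 0 := by
  simp [tCoeff, oddGap]

theorem tCoeff_plusOne {l : List ℕ} (hl : l ≠ []) (n : ℕ) :
    tCoeff u (plusOne l) n = ENNReal.ofReal (n - u)⁻¹ * tCoeff u l n := by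
  obtain ⟨a, l, rfl⟩ := List.exists_cons_of_ne_nil hl
  rw [plusOne, tCoeff, tCoeff, pow_succ', mul_assoc]

theorem tSeries_nil (g : ℕ → ℝ≥0∞) : tSeries u [] g = g 0 := by
  simp [tSeries, tCoeff]

theorem tSeries_zero_cons (l : List ℕ) (g : ℕ → ℝ≥0∞) :
    tSeries u (0 :: l) g = tSeries u l fun q => 2 * ∑' n, oddGap q n * g n := by
  simp only [tSeries, tCoeff, pow_zero, one_mul, ← ENNReal.tsum_mul_left, ← ENNReal.tsum_mul_right]
  rw [ENNReal.tsum_comm]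
  exact tsum_congr fun q => tsum_congr fun n => by ring

section Integration

variable {α : Type*} [MeasurableSpace α] {μ : Measure α} {f h : ℕ → α → ℝ≥0∞} {g : ℕ → ℝ≥0∞}

theorem lintegral_tSeries_plusOne (hf : ∀ n, Measurable (f n))
    (hfg : ∀ n : ℕ, 0 < n → ∫⁻ t, f n t ∂μ = g n * ENNReal.ofReal (n - u)⁻¹)
    {l : List ℕ} (hl : l ≠ []) :
    ∫⁻ t, tSeries u l (fun n => f n t) ∂μ = tSeries u (plusOne l) g := by
  simp only [tSeries]
  rw [lintegral_tsum fun n => ((hf n).mul_const _).aemeasurable]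
  refine tsum_congr fun n => ?_
  rw [lintegral_mul_const _ (hf n), tCoeff_plusOne hl]
  rcases Nat.eq_zero_or_pos n with rfl | hn
  · obtain ⟨a, l, rfl⟩ := List.exists_cons_of_ne_nil hl
    simp only [tCoeff_cons_zero, mul_zero]
  · rw [hfg n hn, mul_assoc]

theorem lintegral_tSeries_one_cons (hf : ∀ n, Measurable (f n))
    (hfg : ∀ n : ℕ, 0 < n → ∫⁻ t, f n t ∂μ = g n * ENNReal.ofReal (n - u)⁻¹)
    (hfh : ∀ᵐ t ∂μ, ∀ q, h q t = 2 * ∑' n, oddGap q n * f n t) (l : List ℕ) :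
    ∫⁻ t, tSeries u l (fun n => h n t) ∂μ = tSeries u (1 :: l) g := by
  rw [← zero_add 1, ← plusOne, ← lintegral_tSeries_plusOne hf hfg (List.cons_ne_nil 0 l)]
  refine lintegral_congr_ae (hfh.mono fun t ht => ?_)
  simp only [tSeries_zero_cons, ht]

theorem measurable_tSeries (hf : ∀ n, Measurable (f n)) (l : List ℕ) :
    Measurable fun t => tSeries u l fun n => f n t :=
  Measurable.tsum fun n => (hf n).mul_const _

end Integration

theorem tsum_oddGap_mul_pow {x : ℝ} (h0 : 0 ≤ x) (h1 : x < 1) (q : ℕ) :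
    ∑' n, oddGap q n * ENNReal.ofReal (x ^ n) = ENNReal.ofReal (x ^ q * (x / (1 - x ^ 2))) := by
  have hx2 : x ^ 2 < 1 := pow_lt_one₀ h0 h1 two_ne_zero
  have hinj : Function.Injective fun i : ℕ => q + (2 * i + 1) := fun i j h => by
    simp only at h; omega
  have hsupp : Function.support (fun n => oddGap q n * ENNReal.ofReal (x ^ n)) ⊆
      Set.range fun i : ℕ => q + (2 * i + 1) := fun n hn => by
    have hgap : q < n ∧ Odd (n - q) := by
      by_contra h
      exact hn (by simp only [oddGap, if_neg h, zero_mul])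
    obtain ⟨hlt, i, hi⟩ := hgap
    exact ⟨i, by simp only; omega⟩
  have hterm (i : ℕ) : oddGap q (q + (2 * i + 1)) * ENNReal.ofReal (x ^ (q + (2 * i + 1))) =
      ENNReal.ofReal (x ^ q * x * (x ^ 2) ^ i) := by
    rw [oddGap, if_pos ⟨by omega, i, by omega⟩, one_mul]
    ring_nf
  rw [← hinj.tsum_eq hsupp, tsum_congr hterm, ← ENNReal.ofReal_tsum_of_nonneg
    (fun i => by positivity) ((summable_geometric_of_lt_one (sq_nonneg x) hx2).mul_left _),
    tsum_mul_left, tsum_geometric_of_lt_one (sq_nonneg x) hx2, mul_assoc, div_eq_mul_inv]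

end Series

section Hyperbolic

theorem inv_sinh_eq_exp {t : ℝ} (ht : 0 < t) :
    (Real.sinh t)⁻¹ = 2 * (Real.exp (-t) / (1 - Real.exp (-t) ^ 2)) := by
  have hlt : Real.exp (-t) < 1 := by simpa using ht
  have hne : 1 - Real.exp (-t) ^ 2 ≠ 0 :=
    (sub_pos.2 (pow_lt_one₀ (Real.exp_pos _).le hlt two_ne_zero)).ne'
  have hexp : Real.exp t * Real.exp (-t) = 1 := by
    rw [← Real.exp_add, add_neg_cancel, Real.exp_zero]
  refine inv_eq_of_mul_eq_one_right ?_
  rw [Real.sinh_eq]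
  field_simp
  linear_combination hexp

theorem tanh_half_pos {t : ℝ} (ht : 0 < t) : 0 < Real.tanh (t / 2) := by
  rw [Real.tanh_eq_sinh_div_cosh]
  exact div_pos (Real.sinh_pos_iff.2 (half_pos ht)) (Real.cosh_pos _)

theorem inv_sinh_eq_tanh_half {t : ℝ} (ht : 0 < t) :
    (Real.sinh t)⁻¹ = (1 - Real.tanh (t / 2) ^ 2) / (2 * Real.tanh (t / 2)) := by
  have : 0 < Real.sinh (t / 2) := Real.sinh_pos_iff.2 (half_pos ht)
  have := Real.cosh_pos (t / 2)
  have ht2 : Real.sinh t = 2 * Real.sinh (t / 2) * Real.cosh (t / 2) := by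
    rw [← Real.sinh_two_mul, mul_div_cancel₀ t two_ne_zero]
  rw [ht2, Real.tanh_eq_sinh_div_cosh]
  field_simp
  rw [Real.cosh_sq, add_sub_cancel_left]

theorem hasDerivAt_tanh_half (t : ℝ) :
    HasDerivAt (fun t => Real.tanh (t / 2)) ((1 - Real.tanh (t / 2) ^ 2) / 2) t := by
  have hc := (Real.cosh_pos (t / 2)).ne'
  have hhalf : HasDerivAt (fun t : ℝ => t / 2) (1 / 2) t := (hasDerivAt_id t).div_const 2
  simp only [Real.tanh_eq_sinh_div_cosh]
  refine (hhalf.sinh.div hhalf.cosh hc).congr_deriv ?_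
  field_simp

theorem continuous_tanh_half : Continuous fun t : ℝ => Real.tanh (t / 2) :=
  continuous_iff_continuousAt.2 fun t => (hasDerivAt_tanh_half t).continuousAt

theorem hasDerivAt_tanh_half_pow_div {n : ℕ} (hn : 0 < n) {t : ℝ} (ht : 0 < t) :
    HasDerivAt (fun t => Real.tanh (t / 2) ^ n / n)
      ((Real.sinh t)⁻¹ * Real.tanh (t / 2) ^ n) t := by
  refine (((hasDerivAt_tanh_half t).pow n).div_const (n : ℝ)).congr_deriv ?_
  obtain ⟨n, rfl⟩ := Nat.exists_eq_succ_of_ne_zero hn.ne'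
  have := tanh_half_pos ht
  rw [inv_sinh_eq_tanh_half ht, Nat.succ_sub_one, pow_succ (Real.tanh (t / 2)) n]
  field_simp

theorem id_div_sinh_le {t : ℝ} (ht : 0 < t) : t / Real.sinh t ≤ 2 * Real.exp (-(t / 2)) := by
  have hhalf : t / 2 ≤ Real.sinh (t / 2) := Real.self_le_sinh_iff.2 (half_pos ht).le
  have hcosh : Real.exp (t / 2) / 2 ≤ Real.cosh (t / 2) := by
    rw [Real.cosh_eq]
    linarith [Real.exp_pos (-(t / 2))]
  rw [div_le_iff₀ (Real.sinh_pos_iff.2 ht)]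
  calc t = 2 * Real.exp (-(t / 2)) * (2 * (t / 2) * (Real.exp (t / 2) / 2)) := by
        rw [Real.exp_neg]; field_simp
    _ ≤ 2 * Real.exp (-(t / 2)) * (2 * Real.sinh (t / 2) * Real.cosh (t / 2)) := by gcongr
    _ = 2 * Real.exp (-(t / 2)) * Real.sinh t := by
        rw [← Real.sinh_two_mul, mul_div_cancel₀ t two_ne_zero]

end Hyperbolic

section IteratedIntegrals

/-- The densities of the two differential forms `dt` and `dt / sinh t`, the pullbacks of
`2 dx / (1 - x²)` and `dx / x` under `x = tanh (t / 2)`. -/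
noncomputable def formDensity (b : Bool) (t : ℝ) : ℝ≥0∞ :=
  if b then 1 else ENNReal.ofReal (Real.sinh t)⁻¹

/-- The iterated integral over `t > t₁ > ⋯ > t_p > 0` of the forms encoded by a word. -/
noncomputable def iteratedLIntegral : List Bool → ℝ → ℝ≥0∞
  | [], _ => 1
  | b :: w, t => ∫⁻ s in Set.Ioo 0 t, formDensity b s * iteratedLIntegral w s

theorem measurable_formDensity (b : Bool) : Measurable (formDensity b) := by
  cases b
  · exact Real.continuous_sinh.measurable.inv.ennreal_ofReal
  · exact measurable_const

theorem lintegral_Ioo_eq_lintegral_Ioi (a t : ℝ) (f : ℝ → ℝ≥0∞) :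
    ∫⁻ s in Set.Ioo a t, f s = ∫⁻ s in Set.Ioi a, (Set.Ioi s).indicator 1 t * f s := by
  have hind (s : ℝ) : (Set.Ioi s).indicator (1 : ℝ → ℝ≥0∞) t * f s = (Set.Iio t).indicator f s := by
    by_cases h : s < t <;> simp [h]
  simp only [hind]
  rw [lintegral_indicator measurableSet_Iio, Measure.restrict_restrict measurableSet_Iio,
    Set.inter_comm, Set.Ioi_inter_Iio]

theorem measurable_uncurry_indicator_Ioi :
    Measurable fun p : ℝ × ℝ => (Set.Ioi p.2).indicator (1 : ℝ → ℝ≥0∞) p.1 :=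
  Measurable.ite (measurableSet_lt measurable_snd measurable_fst) measurable_const measurable_const

theorem measurable_iteratedLIntegral (w : List Bool) : Measurable (iteratedLIntegral w) := by
  induction w with
  | nil => exact measurable_const
  | cons b w ih =>
    simp only [iteratedLIntegral, lintegral_Ioo_eq_lintegral_Ioi]
    exact (measurable_uncurry_indicator_Ioi.mul
      (((measurable_formDensity b).mul ih).comp measurable_snd)).lintegral_prod_right'

theorem lintegral_Ioi_mul_lintegral_Ioo (a : ℝ) {f g : ℝ → ℝ≥0∞} (hf : Measurable f)
    (hg : Measurable g) :
    ∫⁻ t in Set.Ioi a, g t * ∫⁻ s in Set.Ioo a t, f s =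
      ∫⁻ s in Set.Ioi a, (∫⁻ t in Set.Ioi s, g t) * f s := by
  have hind := measurable_uncurry_indicator_Ioi
  have hinner (t : ℝ) : g t * ∫⁻ s in Set.Ioo a t, f s =
      ∫⁻ s in Set.Ioi a, g t * ((Set.Ioi s).indicator 1 t * f s) := by
    rw [lintegral_Ioo_eq_lintegral_Ioi]
    exact (lintegral_const_mul _ ((hind.comp measurable_prodMk_left).mul hf)).symm
  simp only [hinner]
  rw [lintegral_lintegral_swap ((hg.comp measurable_fst).mul
    (hind.mul (hf.comp measurable_snd))).aemeasurable]
  refine setLIntegral_congr_fun measurableSet_Ioi fun s hs => ?_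
  have houter (t : ℝ) : g t * ((Set.Ioi s).indicator 1 t * f s) =
      (Set.Ioi s).indicator g t * f s := by
    by_cases h : s < t <;> simp [h]
  simp only [houter]
  rw [lintegral_mul_const _ (hg.indicator measurableSet_Ioi), lintegral_indicator measurableSet_Ioi,
    Measure.restrict_restrict measurableSet_Ioi,
    Set.inter_eq_left.2 (Set.Ioi_subset_Ioi (Set.mem_Ioi.1 hs).le)]

end IteratedIntegrals

section Kernels

/-- The polylogarithm `A(k; tanh (t / 2))` as an extended nonnegative real. -/
noncomputable def tanhSeries (k : List ℕ) (t : ℝ) : ℝ≥0∞ :=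
  tSeries 0 k fun n => ENNReal.ofReal (Real.tanh (t / 2) ^ n)

/-- The level-two sum with summand `e^{-(n₁ - u) s} ∏ᵢ (n_i - u)^{-k_i}`, which interpolates between
`e^{us}` for the empty composition and the Hurwitz-type `T`-values at `s = 0`. -/
noncomputable def expSeries (u : ℝ) (k : List ℕ) (s : ℝ) : ℝ≥0∞ :=
  tSeries u k fun n => ENNReal.ofReal (Real.exp (-((n - u) * s)))

theorem measurable_tanhSeries (k : List ℕ) : Measurable (tanhSeries k) :=
  measurable_tSeries (fun n => (continuous_tanh_half.pow n).measurable.ennreal_ofReal) k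

theorem measurable_expSeries (u : ℝ) (k : List ℕ) : Measurable (expSeries u k) :=
  measurable_tSeries (fun _ => Measurable.ennreal_ofReal (by fun_prop)) k

theorem measurable_formDensity_mul_tanh_pow (b : Bool) (n : ℕ) :
    Measurable fun t => formDensity b t * ENNReal.ofReal (Real.tanh (t / 2) ^ n) :=
  (measurable_formDensity b).mul (continuous_tanh_half.pow n).measurable.ennreal_ofReal

theorem tanhSeries_nil (t : ℝ) : tanhSeries [] t = 1 := by
  simp [tanhSeries, tSeries_nil]

theorem expSeries_nil (u s : ℝ) : expSeries u [] s = ENNReal.ofReal (Real.exp (u * s)) := by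
  simp [expSeries, tSeries_nil]

theorem expSeries_zero (u : ℝ) (k : List ℕ) : expSeries u k 0 = tSeries u k 1 := by
  simp only [expSeries, mul_zero, neg_zero, Real.exp_zero, ENNReal.ofReal_one, Pi.one_def]

theorem lintegral_Ioi_exp_neg_mul {c : ℝ} (hc : 0 < c) (s : ℝ) :
    ∫⁻ t in Set.Ioi s, ENNReal.ofReal (Real.exp (-(c * t))) =
      ENNReal.ofReal (Real.exp (-(c * s))) * ENNReal.ofReal c⁻¹ := by
  simp only [← neg_mul]
  rw [← ofReal_integral_eq_lintegral_ofReal (integrableOn_exp_mul_Ioi (neg_lt_zero.2 hc) s)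
    (ae_of_all _ fun _ => (Real.exp_pos _).le), integral_exp_mul_Ioi (neg_lt_zero.2 hc),
    neg_div_neg_eq, div_eq_mul_inv, ENNReal.ofReal_mul (Real.exp_pos _).le]

theorem formDensity_false_mul_exp (u : ℝ) (q : ℕ) {t : ℝ} (ht : 0 < t) :
    formDensity false t * ENNReal.ofReal (Real.exp (-((q - u) * t))) =
      2 * ∑' n, oddGap q n * ENNReal.ofReal (Real.exp (-((n - u) * t))) := by
  have hlt : Real.exp (-t) < 1 := by simpa using ht
  have hsplit (n : ℕ) : Real.exp (-((n - u) * t)) = Real.exp (-t) ^ n * Real.exp (u * t) := by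
    rw [← Real.exp_nat_mul, ← Real.exp_add]
    ring_nf
  have hsub : 0 < 1 - Real.exp (-t) ^ 2 :=
    sub_pos.2 (pow_lt_one₀ (Real.exp_pos _).le hlt two_ne_zero)
  have hpow (n : ℕ) : 0 ≤ Real.exp (-t) ^ n := pow_nonneg (Real.exp_pos _).le n
  simp only [hsplit, ENNReal.ofReal_mul (hpow _), ← mul_assoc]
  rw [ENNReal.tsum_mul_right, tsum_oddGap_mul_pow (Real.exp_pos _).le hlt, ← mul_assoc]
  congr 1
  rw [formDensity, if_neg Bool.false_ne_true, inv_sinh_eq_exp ht, ← ENNReal.ofReal_ofNat,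
    ← ENNReal.ofReal_mul (by positivity), ← ENNReal.ofReal_mul zero_le_two]
  ring_nf

theorem lintegral_Ioo_formDensity_false_mul_tanh_pow {n : ℕ} (hn : 0 < n) {t : ℝ} (ht : 0 ≤ t) :
    ∫⁻ s in Set.Ioo 0 t, formDensity false s * ENNReal.ofReal (Real.tanh (s / 2) ^ n) =
      ENNReal.ofReal (Real.tanh (t / 2) ^ n) * ENNReal.ofReal (n : ℝ)⁻¹ := by
  have hcont : ContinuousOn (fun s : ℝ => Real.tanh (s / 2) ^ n / n) (Set.Icc 0 t) :=
    ((continuous_tanh_half.pow n).div_const _).continuousOn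
  have hderiv : ∀ s ∈ Set.Ioo 0 t, HasDerivAt (fun s => Real.tanh (s / 2) ^ n / n)
      ((Real.sinh s)⁻¹ * Real.tanh (s / 2) ^ n) s :=
    fun s hs => hasDerivAt_tanh_half_pow_div hn hs.1
  have hsinh {s : ℝ} (hs : s ∈ Set.Ioo 0 t) : 0 ≤ (Real.sinh s)⁻¹ :=
    inv_nonneg.2 (Real.sinh_pos_iff.2 hs.1).le
  have hnonneg : ∀ s ∈ Set.Ioo 0 t, 0 ≤ (Real.sinh s)⁻¹ * Real.tanh (s / 2) ^ n :=
    fun s hs => mul_nonneg (hsinh hs) (pow_nonneg (tanh_half_pos hs.1).le n)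
  have hint := intervalIntegral.integrableOn_deriv_of_nonneg hcont hderiv hnonneg
  have hFTC := intervalIntegral.integral_eq_sub_of_hasDerivAt_of_le ht hcont hderiv
    ((intervalIntegrable_iff_integrableOn_Ioc_of_le ht).2 hint)
  rw [intervalIntegral.integral_of_le ht, integral_Ioc_eq_integral_Ioo, zero_div, Real.tanh_zero,
    zero_pow hn.ne', zero_div, sub_zero] at hFTC
  calc ∫⁻ s in Set.Ioo 0 t, formDensity false s * ENNReal.ofReal (Real.tanh (s / 2) ^ n)
      = ∫⁻ s in Set.Ioo 0 t, ENNReal.ofReal ((Real.sinh s)⁻¹ * Real.tanh (s / 2) ^ n) :=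
        setLIntegral_congr_fun measurableSet_Ioo fun s hs => (ENNReal.ofReal_mul (hsinh hs)).symm
    _ = ENNReal.ofReal (Real.tanh (t / 2) ^ n / n) := by
        rw [← hFTC, ofReal_integral_eq_lintegral_ofReal (hint.mono_set Set.Ioo_subset_Ioc_self)
          ((ae_restrict_iff' measurableSet_Ioo).2 (ae_of_all _ hnonneg))]
    _ = ENNReal.ofReal (Real.tanh (t / 2) ^ n) * ENNReal.ofReal (n : ℝ)⁻¹ := by
        rw [div_eq_mul_inv, ENNReal.ofReal_mul' (by positivity)]

theorem ofReal_tanh_pow_eq_tsum (q : ℕ) {t : ℝ} (ht : 0 < t) :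
    ENNReal.ofReal (Real.tanh (t / 2) ^ q) =
      2 * ∑' n, oddGap q n * (formDensity false t * ENNReal.ofReal (Real.tanh (t / 2) ^ n)) := by
  have hpos := tanh_half_pos ht
  have hsub : 0 < 1 - Real.tanh (t / 2) ^ 2 :=
    sub_pos.2 (pow_lt_one₀ hpos.le (Real.tanh_lt_one _) two_ne_zero)
  simp only [mul_left_comm (oddGap q _), ENNReal.tsum_mul_left]
  rw [tsum_oddGap_mul_pow hpos.le (Real.tanh_lt_one _), formDensity, if_neg Bool.false_ne_true,
    inv_sinh_eq_tanh_half ht, ← ENNReal.ofReal_ofNat, ← ENNReal.ofReal_mul (by positivity),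
    ← ENNReal.ofReal_mul zero_le_two]
  congr 1
  field_simp

theorem lintegral_Ioo_formDensity_mul_tanhSeries_plusOne {k : List ℕ} (hk : k ≠ []) {t : ℝ}
    (ht : 0 ≤ t) :
    ∫⁻ s in Set.Ioo 0 t, formDensity false s * tanhSeries k s = tanhSeries (plusOne k) t := by
  rw [tanhSeries, ← lintegral_tSeries_plusOne
    (measurable_formDensity_mul_tanh_pow false)
    (fun n hn => by
      rw [sub_zero]; exact lintegral_Ioo_formDensity_false_mul_tanh_pow hn ht) hk]
  simp only [tanhSeries, tSeries, ← ENNReal.tsum_mul_left, mul_assoc]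

theorem lintegral_Ioo_tanhSeries (k : List ℕ) {t : ℝ} (ht : 0 ≤ t) :
    ∫⁻ s in Set.Ioo 0 t, tanhSeries k s = tanhSeries (1 :: k) t :=
  lintegral_tSeries_one_cons
    (measurable_formDensity_mul_tanh_pow false)
    (fun n hn => by
      rw [sub_zero]; exact lintegral_Ioo_formDensity_false_mul_tanh_pow hn ht)
    ((ae_restrict_iff' measurableSet_Ioo).2
      (ae_of_all _ fun _ hs q => ofReal_tanh_pow_eq_tsum q hs.1)) k

theorem lintegral_Ioi_expSeries {u : ℝ} (hu : u < 1) {k : List ℕ} (hk : k ≠ []) (s : ℝ) :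
    ∫⁻ t in Set.Ioi s, expSeries u k t = expSeries u (plusOne k) s :=
  lintegral_tSeries_plusOne (fun _ => Measurable.ennreal_ofReal (by fun_prop))
    (fun n hn => lintegral_Ioi_exp_neg_mul (sub_pos.2 (hu.trans_le (Nat.one_le_cast.2 hn))) s) hk

theorem lintegral_Ioi_formDensity_false_mul_expSeries {u : ℝ} (hu : u < 1) (k : List ℕ) {s : ℝ}
    (hs : 0 ≤ s) :
    ∫⁻ t in Set.Ioi s, formDensity false t * expSeries u k t = expSeries u (1 :: k) s := by
  rw [expSeries, ← lintegral_tSeries_one_cons (fun _ => Measurable.ennreal_ofReal (by fun_prop))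
    (fun n hn => lintegral_Ioi_exp_neg_mul (sub_pos.2 (hu.trans_le (Nat.one_le_cast.2 hn))) s)
    ((ae_restrict_iff' measurableSet_Ioi).2
      (ae_of_all _ fun t ht q => formDensity_false_mul_exp u q (hs.trans_lt ht))) k]
  simp only [expSeries, tSeries, ← ENNReal.tsum_mul_left, mul_assoc]

end Kernels

section Duality

theorem tanhSeries_fromWord (w : List Bool) {t : ℝ} (ht : 0 ≤ t) :
    tanhSeries (fromWord w) t = iteratedLIntegral (w ++ [true]) t := by
  induction w generalizing t with
  | nil =>
    rw [fromWord, ← lintegral_Ioo_tanhSeries [] ht]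
    simp [iteratedLIntegral, formDensity, tanhSeries_nil]
  | cons b w ih =>
    rw [List.cons_append, iteratedLIntegral,
      setLIntegral_congr_fun measurableSet_Ioo fun s hs => by rw [← ih hs.1.le]]
    cases b
    · rw [fromWord_false_cons,
        lintegral_Ioo_formDensity_mul_tanhSeries_plusOne (fromWord_ne_nil w) ht]
    · simp only [fromWord, formDensity, if_true, one_mul, lintegral_Ioo_tanhSeries _ ht]

theorem lintegral_Ioi_formDensity_mul_expSeries_fromWord {u : ℝ} (hu : u < 1) (b : Bool)
    (w : List Bool) {s : ℝ} (hs : 0 ≤ s) :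
    ∫⁻ t in Set.Ioi s, formDensity b t * expSeries u (fromWord w) t =
      expSeries u (fromWord ((!b) :: w)) s := by
  cases b
  · exact lintegral_Ioi_formDensity_false_mul_expSeries hu _ hs
  · simp only [formDensity, if_true, one_mul, Bool.not_true, fromWord_false_cons,
      lintegral_Ioi_expSeries hu (fromWord_ne_nil w)]

theorem lintegral_Ioi_mul_iteratedLIntegral {u : ℝ} (hu : u < 1) (w v : List Bool) {g : ℝ → ℝ≥0∞}
    (hg : Measurable g)
    (hgv : ∀ s, 0 ≤ s → ∫⁻ t in Set.Ioi s, g t = expSeries u (fromWord v) s) :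
    ∫⁻ t in Set.Ioi 0, g t * iteratedLIntegral w t =
      tSeries u (fromWord (w.reverse.map (!·) ++ v)) 1 := by
  induction w generalizing v g with
  | nil => simp [iteratedLIntegral, hgv, expSeries_zero]
  | cons b w ih =>
    have hb (f : ℝ → ℝ≥0∞) (hf : Measurable f) : Measurable fun t => formDensity b t * f t :=
      (measurable_formDensity b).mul hf
    simp only [iteratedLIntegral]
    rw [lintegral_Ioi_mul_lintegral_Ioo 0 (hb _ (measurable_iteratedLIntegral w)) hg,
      setLIntegral_congr_fun measurableSet_Ioi fun s hs => by
        rw [hgv s (Set.mem_Ioi.1 hs).le, ← mul_assoc, mul_comm (expSeries _ _ _)],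
      ih ((!b) :: v) (hb _ (measurable_expSeries u _)) fun s hs =>
        lintegral_Ioi_formDensity_mul_expSeries_fromWord hu b v hs]
    simp

theorem lintegral_exp_mul_tanhSeries {u : ℝ} (hu : u < 1) {k : List ℕ} (hk : k ≠ [])
    (hpos : ∀ a ∈ k, 0 < a) :
    ∫⁻ t in Set.Ioi 0, ENNReal.ofReal (Real.exp (u * t)) * (formDensity false t * tanhSeries k t) =
      tSeries u (plusOne (HDual k.reverse)) 1 := by
  have hbase (s : ℝ) (hs : 0 ≤ s) : ∫⁻ t in Set.Ioi s,
      formDensity false t * ENNReal.ofReal (Real.exp (u * t)) = expSeries u (fromWord []) s := by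
    rw [fromWord, ← lintegral_Ioi_formDensity_false_mul_expSeries hu [] hs]
    simp only [expSeries_nil]
  have hexp : Measurable fun t : ℝ => ENNReal.ofReal (Real.exp (u * t)) :=
    Measurable.ennreal_ofReal (by fun_prop)
  calc ∫⁻ t in Set.Ioi 0, ENNReal.ofReal (Real.exp (u * t)) * (formDensity false t * tanhSeries k t)
      = ∫⁻ t in Set.Ioi 0, formDensity false t * ENNReal.ofReal (Real.exp (u * t)) *
          iteratedLIntegral (toWord k ++ [true]) t :=
        setLIntegral_congr_fun measurableSet_Ioi fun t ht => by
          rw [← tanhSeries_fromWord (toWord k) (Set.mem_Ioi.1 ht).le, fromWord_toWord hk hpos,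
            mul_left_comm, mul_assoc]
    _ = tSeries u (fromWord ((toWord k ++ [true]).reverse.map (!·) ++ [])) 1 :=
        lintegral_Ioi_mul_iteratedLIntegral hu _ [] ((measurable_formDensity false).mul hexp) hbase
    _ = tSeries u (plusOne (HDual k.reverse)) 1 := by
        rw [plusOne_HDual_reverse, List.append_nil, List.reverse_append]
        rfl

end Duality

section Finiteness

theorem tanhSeries_plusOne_le {k : List ℕ} (hk : k ≠ []) (t : ℝ) :
    tanhSeries (plusOne k) t ≤ tanhSeries k t := by
  refine ENNReal.tsum_le_tsum fun n => mul_le_mul_right ?_ _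
  rw [tCoeff_plusOne hk, sub_zero]
  exact mul_le_of_le_one_left' (ENNReal.ofReal_le_one.2 (Nat.cast_inv_le_one n))

theorem tanhSeries_fromWord_le (w : List Bool) {t : ℝ} (ht : 0 ≤ t) :
    tanhSeries (fromWord w) t ≤ ENNReal.ofReal (t ^ (w.count true + 1)) := by
  have hstep {k : List ℕ} {d : ℕ} (hkd : ∀ s, 0 ≤ s → tanhSeries k s ≤ ENNReal.ofReal (s ^ d))
      (t : ℝ) (ht : 0 ≤ t) : tanhSeries (1 :: k) t ≤ ENNReal.ofReal (t ^ (d + 1)) := by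
    rw [← lintegral_Ioo_tanhSeries k ht]
    calc ∫⁻ s in Set.Ioo 0 t, tanhSeries k s
        ≤ ∫⁻ _ in Set.Ioo 0 t, ENNReal.ofReal (t ^ d) :=
          setLIntegral_mono measurable_const fun s hs => (hkd s hs.1.le).trans
            (ENNReal.ofReal_le_ofReal (pow_le_pow_left₀ hs.1.le hs.2.le d))
      _ = ENNReal.ofReal (t ^ (d + 1)) := by
          rw [setLIntegral_const, Real.volume_Ioo, sub_zero, ← ENNReal.ofReal_mul (by positivity),
            pow_succ]
  induction w generalizing t with
  | nil => exact hstep (fun s _ => by simp [tanhSeries_nil]) t ht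
  | cons b w ih =>
    cases b
    · rw [fromWord_false_cons, List.count_cons_of_ne Bool.false_ne_true]
      exact (tanhSeries_plusOne_le (fromWord_ne_nil w) t).trans (ih ht)
    · rw [fromWord, List.count_cons_self]
      exact hstep (fun s hs => ih hs) t ht

theorem lintegral_exp_mul_tanhSeries_ne_top {u : ℝ} (hu : u < 1 / 2) {k : List ℕ} (hk : k ≠ [])
    (hpos : ∀ a ∈ k, 0 < a) :
    ∫⁻ t in Set.Ioi 0, ENNReal.ofReal (Real.exp (u * t)) * (formDensity false t * tanhSeries k t) ≠
      ⊤ := by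
  obtain ⟨d, hd⟩ : ∃ d : ℕ, ∀ t, 0 ≤ t → tanhSeries k t ≤ ENNReal.ofReal (t ^ (d + 1)) :=
    ⟨_, fun t ht => by simpa only [fromWord_toWord hk hpos] using
      tanhSeries_fromWord_le (toWord k) ht⟩
  have hint : IntegrableOn (fun t : ℝ => 2 * (t ^ (d : ℝ) * Real.exp (-(1 / 2 - u) * t)))
      (Set.Ioi 0) := by
    simpa only [IntegrableOn, Real.rpow_one] using (integrableOn_rpow_mul_exp_neg_mul_rpow
      (neg_one_lt_zero.trans_le d.cast_nonneg) one_pos (sub_pos.2 hu)).const_mul 2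
  refine ne_top_of_le_ne_top hint.lintegral_lt_top.ne
    (setLIntegral_mono' measurableSet_Ioi fun t (ht : 0 < t) => ?_)
  calc ENNReal.ofReal (Real.exp (u * t)) * (formDensity false t * tanhSeries k t)
      ≤ ENNReal.ofReal (Real.exp (u * t)) *
          (ENNReal.ofReal (Real.sinh t)⁻¹ * ENNReal.ofReal (t ^ (d + 1))) :=
        mul_le_mul_right (mul_le_mul_right (hd t ht.le) _) _
    _ = ENNReal.ofReal (t / Real.sinh t * (t ^ d * Real.exp (u * t))) := by
        rw [← ENNReal.ofReal_mul' (by positivity), ← ENNReal.ofReal_mul (Real.exp_pos _).le]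
        ring_nf
    _ ≤ ENNReal.ofReal (2 * Real.exp (-(t / 2)) * (t ^ d * Real.exp (u * t))) := by
        gcongr
        exact id_div_sinh_le ht
    _ = ENNReal.ofReal (2 * (t ^ (d : ℝ) * Real.exp (-(1 / 2 - u) * t))) := by
        rw [Real.rpow_natCast, mul_comm (t ^ d), mul_assoc, ← mul_assoc (Real.exp _),
          ← Real.exp_add, mul_comm (t ^ d)]
        ring_nf

end Finiteness

section PowerSeries

theorem ne_top_of_tsum_mul_pow_ne_top {a : ℕ → ℝ≥0∞} {r : ℝ} (hr : 0 < r)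
    (ha : ∑' m, a m * ENNReal.ofReal (r ^ m) ≠ ⊤) (m : ℕ) : a m ≠ ⊤ := fun h =>
  ENNReal.ne_top_of_tsum_ne_top ha m (by
    rw [h, ENNReal.top_mul (ENNReal.ofReal_pos.2 (pow_pos hr m)).ne'])

theorem hasFPowerSeriesAt_tsum_mul_pow {a : ℕ → ℝ≥0∞} {r : ℝ} (hr : 0 < r)
    (ha : ∑' m, a m * ENNReal.ofReal (r ^ m) ≠ ⊤) :
    HasFPowerSeriesAt (fun x : ℝ => ∑' m, (a m).toReal * x ^ m)
      (FormalMultilinearSeries.ofScalars ℝ fun m => (a m).toReal) 0 := by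
  have hsum : Summable fun m => (a m).toReal * r ^ m := by
    simpa [ENNReal.toReal_mul, hr.le] using ENNReal.summable_toReal ha
  have hrad := (FormalMultilinearSeries.ofScalars ℝ fun m => (a m).toReal).le_radius_of_summable
    (r := r.toNNReal) (by simpa [hr.le, FormalMultilinearSeries.ofScalars_norm] using hsum)
  have hball := FormalMultilinearSeries.hasFPowerSeriesOnBall _
    ((ENNReal.coe_pos.2 (Real.toNNReal_pos.2 hr)).trans_le hrad)
  exact hball.hasFPowerSeriesAt.congr
    (Filter.Eventually.of_forall (FormalMultilinearSeries.ofScalars_sum_eq _))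

theorem eq_of_tsum_mul_pow_eq {a b : ℕ → ℝ≥0∞} {r : ℝ} (hr : 0 < r)
    (ha : ∑' m, a m * ENNReal.ofReal (r ^ m) ≠ ⊤)
    (hab : ∀ x ∈ Set.Ioc 0 r, ∑' m, a m * ENNReal.ofReal (x ^ m) =
      ∑' m, b m * ENNReal.ofReal (x ^ m)) (m : ℕ) : a m = b m := by
  have hb : ∑' m, b m * ENNReal.ofReal (r ^ m) ≠ ⊤ := hab r ⟨hr, le_rfl⟩ ▸ ha
  have hfin_a := ne_top_of_tsum_mul_pow_ne_top hr ha
  have hfin_b := ne_top_of_tsum_mul_pow_ne_top hr hb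
  have hreal (c : ℕ → ℝ≥0∞) {x : ℝ} (hx : 0 < x) (hc : ∀ m, c m ≠ ⊤) :
      (∑' m, c m * ENNReal.ofReal (x ^ m)).toReal = ∑' m, (c m).toReal * x ^ m := by
    rw [ENNReal.tsum_toReal_eq fun m => ENNReal.mul_ne_top (hc m) ENNReal.ofReal_ne_top]
    simp only [ENNReal.toReal_mul, ENNReal.toReal_ofReal (pow_nonneg hx.le _)]
  have hpa := hasFPowerSeriesAt_tsum_mul_pow hr ha
  have hpb := hasFPowerSeriesAt_tsum_mul_pow hr hb
  have hright : ∀ᶠ x in nhdsWithin (0 : ℝ) (Set.Ioi 0),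
      ∑' m, (a m).toReal * x ^ m = ∑' m, (b m).toReal * x ^ m := by
    filter_upwards [Ioc_mem_nhdsGT hr] with x hx
    rw [← hreal a hx.1 hfin_a, ← hreal b hx.1 hfin_b, hab x hx]
  have hnhds := (hpa.analyticAt.frequently_eq_iff_eventually_eq hpb.analyticAt).1
    (hright.frequently.filter_mono (nhdsWithin_mono 0 fun x hx => ne_of_gt hx))
  have hcoeff := FormalMultilinearSeries.ofScalars_series_injective ℝ ℝ
    (hpa.eq_formalMultilinearSeries_of_eventually hpb hnhds)
  exact (ENNReal.toReal_eq_toReal_iff' (hfin_a m) (hfin_b m)).1 (congrFun hcoeff m)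

end PowerSeries

section Expansion

/-- The composition `k + j` of the paper, for a tuple `j` whose length is the depth of `k`. -/
def addTuple (k : List ℕ) {r : ℕ} (j : Fin r → ℕ) : List ℕ :=
  List.ofFn fun i => k.getD i 0 + j i

/-- The weight `B(k; j) = ∏ᵢ C(k_i + j_i - 1, j_i)`, for a tuple `j` whose length is the depth of
`k`. -/
def binomWeight (k : List ℕ) {r : ℕ} (j : Fin r → ℕ) : ℕ :=
  ∏ i : Fin r, (k.getD i 0 + j i - 1).choose (j i)

theorem addTuple_cons (a : ℕ) (k : List ℕ) {r : ℕ} (i : ℕ) (j : Fin r → ℕ) :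
    addTuple (a :: k) (Fin.cons i j : Fin (r + 1) → ℕ) = (a + i) :: addTuple k j := by
  simp [addTuple, List.ofFn_succ]

theorem binomWeight_cons (a : ℕ) (k : List ℕ) {r : ℕ} (i : ℕ) (j : Fin r → ℕ) :
    binomWeight (a :: k) (Fin.cons i j : Fin (r + 1) → ℕ) =
      (a + i - 1).choose i * binomWeight k j := by
  simp [binomWeight, Fin.prod_univ_succ]

theorem hasSum_choose_mul_inv_pow {u x : ℝ} (hu : 0 ≤ u) (hux : u < x) (a : ℕ) :
    HasSum (fun j => ((a + j - 1).choose j : ℝ) * x⁻¹ ^ (a + j) * u ^ j) ((x - u)⁻¹ ^ a) := by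
  have hx : 0 < x := hu.trans_lt hux
  cases a with
  | zero =>
    convert hasSum_single (f := fun j => ((0 + j - 1).choose j : ℝ) * x⁻¹ ^ (0 + j) * u ^ j) 0
      fun j hj => ?_ using 1
    · simp
    · rw [Nat.choose_eq_zero_of_lt (by omega), Nat.cast_zero, zero_mul, zero_mul]
  | succ a =>
    have hlt : ‖u / x‖ < 1 := by
      rwa [Real.norm_of_nonneg (div_nonneg hu hx.le), div_lt_one hx]
    have hgeom := (hasSum_choose_mul_geometric_of_norm_lt_one a hlt).mul_left (x⁻¹ ^ (a + 1))
    rw [one_div, ← inv_pow, ← mul_pow, ← mul_inv, mul_sub, mul_one, mul_div_cancel₀ _ hx.ne']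
      at hgeom
    have hterm (j : ℕ) : ((a + 1 + j - 1).choose j : ℝ) * x⁻¹ ^ (a + 1 + j) * u ^ j =
        x⁻¹ ^ (a + 1) * ((j + a).choose a * (u / x) ^ j) := by
      rw [Nat.add_right_comm, Nat.add_sub_cancel, add_comm a j, Nat.choose_symm_add, div_eq_mul_inv]
      ring
    simpa only [hterm] using hgeom

theorem ofReal_inv_sub_pow_eq_tsum {u x : ℝ} (hu : 0 ≤ u) (hux : u < x) (a : ℕ) :
    ENNReal.ofReal (x - u)⁻¹ ^ a = ∑' j,
      ((a + j - 1).choose j : ℝ≥0∞) * ENNReal.ofReal x⁻¹ ^ (a + j) * ENNReal.ofReal (u ^ j) := by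
  have hx : 0 ≤ x⁻¹ := inv_nonneg.2 (hu.trans hux.le)
  have hsum := hasSum_choose_mul_inv_pow hu hux a
  rw [← ENNReal.ofReal_pow (inv_nonneg.2 (sub_nonneg.2 hux.le)), ← hsum.tsum_eq,
    ENNReal.ofReal_tsum_of_nonneg (fun j => by positivity) hsum.summable]
  refine tsum_congr fun j => ?_
  rw [ENNReal.ofReal_mul (by positivity), ENNReal.ofReal_mul (by positivity), ENNReal.ofReal_pow hx,
    ENNReal.ofReal_natCast]

theorem tsum_tuple_succ {r : ℕ} (f : (Fin (r + 1) → ℕ) → ℝ≥0∞) :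
    ∑' j, f j = ∑' (i) (j : Fin r → ℕ), f (Fin.cons i j) := by
  rw [← (Fin.consEquiv fun _ => ℕ).tsum_eq, ENNReal.tsum_prod']
  rfl

theorem tCoeff_eq_tsum {u : ℝ} (hu : 0 ≤ u) (hu1 : u < 1) (l : List ℕ) (n : ℕ) :
    tCoeff u l n = ∑' j : Fin l.length → ℕ,
      (binomWeight l j : ℝ≥0∞) * tCoeff 0 (addTuple l j) n * ENNReal.ofReal (u ^ ∑ i, j i) := by
  induction l generalizing n with
  | nil => simp [tsum_fintype, binomWeight, addTuple, tCoeff]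
  | cons a l ih =>
    rw [List.length_cons, tsum_tuple_succ]
    simp only [binomWeight_cons, addTuple_cons, Fin.sum_cons]
    rcases Nat.eq_zero_or_pos n with rfl | hn
    · simp only [tCoeff_cons_zero, mul_zero, zero_mul, tsum_zero]
    have hinner : 2 * ∑' q, oddGap q n * tCoeff u l q = ∑' j : Fin l.length → ℕ,
        (binomWeight l j : ℝ≥0∞) * (2 * ∑' q, oddGap q n * tCoeff 0 (addTuple l j) q) *
          ENNReal.ofReal (u ^ ∑ i, j i) := by
      simp only [ih, ← ENNReal.tsum_mul_left, ← ENNReal.tsum_mul_right]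
      rw [ENNReal.tsum_comm]
      exact tsum_congr fun j => tsum_congr fun q => by ring
    rw [tCoeff, hinner,
      ofReal_inv_sub_pow_eq_tsum hu (hu1.trans_le (Nat.one_le_cast.2 hn)), ← ENNReal.tsum_mul_right]
    refine tsum_congr fun i => ?_
    rw [← ENNReal.tsum_mul_left]
    refine tsum_congr fun j => ?_
    rw [tCoeff, sub_zero, pow_add u, ENNReal.ofReal_mul (pow_nonneg hu i), Nat.cast_mul]
    ring

theorem tsum_tuple_eq_tsum_antidiagonalTuple (r : ℕ) (f : (Fin r → ℕ) → ℝ≥0∞) :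
    ∑' j, f j = ∑' m, ∑ j ∈ Finset.Nat.antidiagonalTuple r m, f j := by
  rw [← (Finset.Nat.sigmaAntidiagonalTupleEquivTuple r).tsum_eq, ENNReal.tsum_sigma']
  exact tsum_congr fun m => Finset.tsum_subtype _ f

/-- The sum `∑_{|j| = m} B(l; j) T(l + j)` over the tuples `j` of length `dep(l)`, as an extended
nonnegative real. -/
noncomputable def binomTSum (l : List ℕ) (m : ℕ) : ℝ≥0∞ :=
  ∑ j ∈ Finset.Nat.antidiagonalTuple l.length m,
    (binomWeight l j : ℝ≥0∞) * tSeries 0 (addTuple l j) 1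

theorem tSeries_one_eq_tsum {u : ℝ} (hu : 0 ≤ u) (hu1 : u < 1) (l : List ℕ) :
    tSeries u l 1 = ∑' m, binomTSum l m * ENNReal.ofReal (u ^ m) := by
  simp only [tSeries, binomTSum, tCoeff_eq_tsum hu hu1 l, Pi.one_apply, one_mul]
  rw [ENNReal.tsum_comm, tsum_tuple_eq_tsum_antidiagonalTuple]
  refine tsum_congr fun m => ?_
  rw [Finset.sum_mul]
  refine Finset.sum_congr rfl fun j hj => ?_
  rw [ENNReal.tsum_mul_right, ENNReal.tsum_mul_left, Finset.Nat.mem_antidiagonalTuple.1 hj]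

theorem lintegral_exp_mul_eq_tsum {u : ℝ} (hu : 0 ≤ u) {f : ℝ → ℝ≥0∞} (hf : Measurable f) :
    ∫⁻ t in Set.Ioi 0, ENNReal.ofReal (Real.exp (u * t)) * f t =
      ∑' m : ℕ, (∫⁻ t in Set.Ioi 0, ENNReal.ofReal (t ^ m / m.factorial) * f t) *
        ENNReal.ofReal (u ^ m) := by
  have hmeas (m : ℕ) : Measurable fun t : ℝ => ENNReal.ofReal (t ^ m / m.factorial) * f t :=
    Measurable.mul (Measurable.ennreal_ofReal (by fun_prop)) hf
  rw [tsum_congr fun m => (lintegral_mul_const (ENNReal.ofReal (u ^ m)) (hmeas m)).symm,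
    ← lintegral_tsum fun m => ((hmeas m).mul_const _).aemeasurable]
  refine setLIntegral_congr_fun measurableSet_Ioi fun t (ht : 0 < t) => ?_
  have hexp : HasSum (fun m : ℕ => t ^ m / m.factorial * u ^ m) (Real.exp (u * t)) := by
    have hterm (m : ℕ) : t ^ m / m.factorial * u ^ m = (u * t) ^ m / m.factorial := by ring
    simpa only [hterm, Real.exp_eq_exp_ℝ] using NormedSpace.expSeries_div_hasSum_exp (u * t)
  rw [← hexp.tsum_eq, ENNReal.ofReal_tsum_of_nonneg (fun m => by positivity) hexp.summable,
    ← ENNReal.tsum_mul_right]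
  refine tsum_congr fun m => ?_
  rw [ENNReal.ofReal_mul (by positivity), mul_right_comm]

end Expansion

section Values

/-- The index tuples `n₁ > ⋯ > n_r > 0` with `n_i ≡ r + 1 - i (mod 2)` of a level-two sum. -/
def IsTChain {r : ℕ} (n : Fin r → ℕ) : Prop :=
  StrictAnti n ∧ (∀ i, 0 < n i) ∧ ∀ i, n i % 2 = (r - i.val) % 2

/-- The largest index `n₁` of a tuple, with the convention that it is `0` for the empty tuple. -/
def topIndex {r : ℕ} (n : Fin r → ℕ) : ℕ :=
  if h : 0 < r then n ⟨0, h⟩ else 0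

theorem topIndex_cons {r : ℕ} (x : ℕ) (n : Fin r → ℕ) :
    topIndex (Fin.cons x n : Fin (r + 1) → ℕ) = x :=
  dif_pos r.succ_pos

theorem isTChain_cons {r : ℕ} (x : ℕ) (n : Fin r → ℕ) :
    IsTChain (Fin.cons x n : Fin (r + 1) → ℕ) ↔
      IsTChain n ∧ topIndex n < x ∧ Odd (x - topIndex n) := by
  have hparity (i : Fin r) : (r + 1 - (i.val + 1)) % 2 = (r - i.val) % 2 := by
    rw [Nat.add_sub_add_right]
  cases r with
  | zero =>
    simp [IsTChain, topIndex, Fin.forall_fin_one, Subsingleton.strictAnti, Nat.odd_iff]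
  | succ r =>
    have htop : topIndex n = n 0 := dif_pos r.succ_pos
    have hanti : StrictAnti (Fin.cons x n : Fin (r + 2) → ℕ) ↔ n 0 < x ∧ StrictAnti n :=
      strictAnti_vecCons
    simp only [IsTChain, hanti, Fin.forall_fin_succ (n := r + 1), Fin.cons_zero, Fin.cons_succ,
      htop, Fin.val_succ, hparity, Nat.odd_iff, Fin.val_zero]
    constructor
    · rintro ⟨⟨hlt, hn⟩, ⟨-, hpos⟩, hx, hpar⟩
      have h0 : n 0 % 2 = (r + 1) % 2 := hpar 0
      exact ⟨⟨hn, hpos, hpar⟩, hlt, by omega⟩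
    · rintro ⟨⟨hn, hpos, hpar⟩, hlt, hodd⟩
      have h0 : n 0 % 2 = (r + 1) % 2 := hpar 0
      exact ⟨⟨hlt, hn⟩, ⟨by omega, hpos⟩, by omega, hpar⟩

theorem tSeries_eq_tsum_indicator (u : ℝ) (k : List ℕ) (g : ℕ → ℝ≥0∞) :
    tSeries u k g = 2 ^ k.length * ∑' n : Fin k.length → ℕ, {n | IsTChain n}.indicator
      (fun n => g (topIndex n) * ∏ i, ENNReal.ofReal (n i - u)⁻¹ ^ k.get i) n := by
  induction k generalizing g with
  | nil => simp [tSeries_nil, tsum_fintype, IsTChain, topIndex, Subsingleton.strictAnti]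
  | cons a k ih =>
    have hterm (x : ℕ) (n : Fin k.length → ℕ) : {n : Fin (k.length + 1) → ℕ | IsTChain n}.indicator
        (fun n => g (topIndex n) * ∏ i, ENNReal.ofReal (n i - u)⁻¹ ^ (a :: k).get i)
        (Fin.cons x n) = g x * ENNReal.ofReal (x - u)⁻¹ ^ a * {n | IsTChain n}.indicator
          (fun n => oddGap (topIndex n) x * ∏ i, ENNReal.ofReal (n i - u)⁻¹ ^ k.get i) n := by
      have hprod : ∏ i : Fin (k.length + 1),
          ENNReal.ofReal ((Fin.cons x n : Fin (k.length + 1) → ℕ) i - u)⁻¹ ^ (a :: k).get i =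
            ENNReal.ofReal (x - u)⁻¹ ^ a * ∏ i, ENNReal.ofReal (n i - u)⁻¹ ^ k.get i :=
        Fin.prod_univ_succ _
      classical
      simp only [Set.indicator_apply, Set.mem_ofPred_eq, isTChain_cons, topIndex_cons, oddGap,
        ite_and]
      split_ifs
      · rw [hprod, one_mul, mul_assoc]
      all_goals simp only [zero_mul, mul_zero]
    simp only [List.length_cons]
    rw [tsum_tuple_succ, ← ENNReal.tsum_mul_left]
    refine tsum_congr fun x => ?_
    simp only [hterm, ENNReal.tsum_mul_left]
    rw [tCoeff, ← tSeries, ih, pow_succ]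
    ring

theorem tSeries_eq_tsum_isTChain (u : ℝ) (k : List ℕ) (g : ℕ → ℝ≥0∞) :
    tSeries u k g = 2 ^ k.length * ∑' n : {n : Fin k.length → ℕ // IsTChain n},
      g (topIndex n.1) * ∏ i, ENNReal.ofReal (n.1 i - u)⁻¹ ^ k.get i :=
  (tSeries_eq_tsum_indicator u k g).trans (congrArg (2 ^ k.length * ·) (tsum_subtype _ _).symm)

theorem two_pow_mul_tsum_eq_toReal (k : List ℕ) {x : ℝ} (hx : 0 ≤ x) :
    2 ^ k.length * ∑' n : {n : Fin k.length → ℕ // IsTChain n},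
      x ^ topIndex n.1 / ∏ i, (n.1 i : ℝ) ^ k.get i =
      (tSeries 0 k fun n => ENNReal.ofReal (x ^ n)).toReal := by
  have hterm (n : Fin k.length → ℕ) : ENNReal.ofReal (x ^ topIndex n) *
      ∏ i, ENNReal.ofReal (n i - 0)⁻¹ ^ k.get i =
        ENNReal.ofReal (x ^ topIndex n / ∏ i, (n i : ℝ) ^ k.get i) := by
    rw [div_eq_mul_inv, ENNReal.ofReal_mul (by positivity), ← Finset.prod_inv_distrib,
      ENNReal.ofReal_prod_of_nonneg fun i _ => by positivity]
    simp only [sub_zero, ← inv_pow]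
    congr 1
    exact Finset.prod_congr rfl fun i _ => (ENNReal.ofReal_pow (by positivity) _).symm
  simp only [tSeries_eq_tsum_isTChain, hterm]
  rw [ENNReal.toReal_mul, ENNReal.tsum_toReal_eq fun _ => ENNReal.ofReal_ne_top, ENNReal.toReal_pow,
    ENNReal.toReal_ofNat]
  congr 1
  exact tsum_congr fun n => (ENNReal.toReal_ofReal (by positivity)).symm

theorem MTV_eq_toReal_tSeries (k : List ℕ) : MTV k = (tSeries 0 k 1).toReal := by
  have h := two_pow_mul_tsum_eq_toReal k zero_le_one
  simp only [one_pow, ENNReal.ofReal_one, ← Pi.one_def] at h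
  rw [← h, MTV]
  simp only [one_div, Finset.prod_inv_distrib]
  rfl

theorem AFn_tanh_eq_toReal_tanhSeries {k : List ℕ} (hk : k ≠ []) {t : ℝ} (ht : 0 < t) :
    AFn k (Real.tanh (t / 2)) = (tanhSeries k t).toReal := by
  have hlen : 0 < k.length := List.length_pos_iff.2 hk
  rw [tanhSeries, ← two_pow_mul_tsum_eq_toReal k (tanh_half_pos ht).le, AFn, dif_pos hlen]
  simp only [topIndex, dif_pos hlen]
  rfl

end Values

section Psi

/-- The value `ψ(m + 1; k) = (1 / m!) ∫₀^∞ t^m A(k; tanh (t / 2)) dt / sinh t` as an extended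
nonnegative real. -/
noncomputable def psiLIntegral (k : List ℕ) (m : ℕ) : ℝ≥0∞ :=
  ∫⁻ t in Set.Ioi 0, ENNReal.ofReal (t ^ m / m.factorial) * (formDensity false t * tanhSeries k t)

theorem psiKT_natCast_add_one {k : List ℕ} (hk : k ≠ []) {m : ℕ}
    (hfin : psiLIntegral k m ≠ ⊤) :
    psiKT (m + 1) k = (psiLIntegral k m).toReal := by
  have hmeas : Measurable fun t : ℝ => ENNReal.ofReal (t ^ m / m.factorial) *
      (formDensity false t * tanhSeries k t) :=
    Measurable.mul (Measurable.ennreal_ofReal (by fun_prop))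
      ((measurable_formDensity false).mul (measurable_tanhSeries k))
  have hfact : (m.factorial : ℂ) ≠ 0 := Nat.cast_ne_zero.2 m.factorial_ne_zero
  have hintegrand (t : ℝ) (ht : 0 < t) : (t : ℂ) ^ ((m : ℂ) + 1 - 1) *
      ((AFn k (Real.tanh (t / 2)) / Real.sinh t : ℝ) : ℂ) = (m.factorial : ℂ) *
        ((ENNReal.ofReal (t ^ m / m.factorial) *
          (formDensity false t * tanhSeries k t)).toReal : ℂ) := by
    have hsinh : 0 ≤ (Real.sinh t)⁻¹ := inv_nonneg.2 (Real.sinh_pos_iff.2 ht).le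
    rw [add_sub_cancel_right, Complex.cpow_natCast, AFn_tanh_eq_toReal_tanhSeries hk ht,
      formDensity, if_neg Bool.false_ne_true, ENNReal.toReal_mul, ENNReal.toReal_mul,
      ENNReal.toReal_ofReal (by positivity), ENNReal.toReal_ofReal hsinh]
    push_cast
    field_simp
  rw [psiKT, setIntegral_congr_fun measurableSet_Ioi hintegrand, integral_const_mul,
    integral_complex_ofReal, integral_toReal hmeas.aemeasurable (ae_lt_top hmeas hfin),
    Complex.Gamma_nat_eq_factorial, one_div, inv_mul_cancel_left₀ hfact, psiLIntegral]

theorem tsum_psiLIntegral_mul_pow (k : List ℕ) {u : ℝ} (hu : 0 ≤ u) :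
    ∑' m, psiLIntegral k m * ENNReal.ofReal (u ^ m) = ∫⁻ t in Set.Ioi 0,
      ENNReal.ofReal (Real.exp (u * t)) * (formDensity false t * tanhSeries k t) :=
  (lintegral_exp_mul_eq_tsum hu ((measurable_formDensity false).mul (measurable_tanhSeries k))).symm

theorem tsum_psiLIntegral_mul_pow_ne_top {u : ℝ} (hu : 0 ≤ u) (hu2 : u < 1 / 2) {k : List ℕ}
    (hk : k ≠ []) (hpos : ∀ a ∈ k, 0 < a) :
    ∑' m, psiLIntegral k m * ENNReal.ofReal (u ^ m) ≠ ⊤ :=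
  tsum_psiLIntegral_mul_pow k hu ▸ lintegral_exp_mul_tanhSeries_ne_top hu2 hk hpos

theorem psiLIntegral_ne_top {k : List ℕ} (hk : k ≠ []) (hpos : ∀ a ∈ k, 0 < a) (m : ℕ) :
    psiLIntegral k m ≠ ⊤ :=
  have hr : (0 : ℝ) < 1 / 4 := by norm_num
  ne_top_of_tsum_mul_pow_ne_top hr
    (tsum_psiLIntegral_mul_pow_ne_top hr.le (by norm_num) hk hpos) m

theorem psiLIntegral_eq_binomTSum {k : List ℕ} (hk : k ≠ []) (hpos : ∀ a ∈ k, 0 < a) (m : ℕ) :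
    psiLIntegral k m = binomTSum (plusOne (HDual k.reverse)) m := by
  have hr : (0 : ℝ) < 1 / 4 := by norm_num
  refine eq_of_tsum_mul_pow_eq hr
    (tsum_psiLIntegral_mul_pow_ne_top hr.le (by norm_num) hk hpos) (fun u hu => ?_) m
  have hu1 : u < 1 := hu.2.trans_lt (by norm_num)
  rw [tsum_psiLIntegral_mul_pow k hu.1.le, lintegral_exp_mul_tanhSeries hu1 hk hpos,
    tSeries_one_eq_tsum hu.1.le hu1]

end Psi

end LevelTwo

theorem stmt10 (k : List ℕ) (hk : k ≠ []) (hkpos : ∀ a ∈ k, 0 < a) (m : ℕ) :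
    psiKT (m + 1) k =
      ∑ j ∈ Finset.Nat.antidiagonalTuple (k.sum + 1 - k.length) m,
        ((∏ i : Fin (k.sum + 1 - k.length), Nat.choose
            ((plusOne (HDual k.reverse)).getD (i : ℕ) 0 + j i - 1) (j i) : ℕ) : ℂ) *
          ((MTV (List.ofFn fun i : Fin (k.sum + 1 - k.length) =>
            (plusOne (HDual k.reverse)).getD (i : ℕ) 0 + j i) : ℝ) : ℂ) := by
  rw [← length_plusOne_HDual_reverse hk hkpos]
  have hfin := psiLIntegral_ne_top hk hkpos m
  rw [psiKT_natCast_add_one hk hfin]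
  rw [psiLIntegral_eq_binomTSum hk hkpos, binomTSum] at hfin ⊢
  rw [ENNReal.toReal_sum (ENNReal.sum_ne_top.1 hfin), Complex.ofReal_sum]
  refine Finset.sum_congr rfl fun j _ => ?_
  rw [ENNReal.toReal_mul, ENNReal.toReal_natCast, Complex.ofReal_mul, Complex.ofReal_natCast,
    ← MTV_eq_toReal_tSeries, binomWeight, addTuple]
end
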